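/- arXiv:2110.15947 — 2 statements merged into one kernel-verified Lean document; each statement's English description precedes it below -/
import Mathlib

section
/- (Theorem 3.3, local solvability and stability for the inverse problem with polynomials in the boundary condition.) Let R_0 = Σ_{n=0}^{l} r_{n,0} λ^n and R_1 = Σ_{n=0}^{l−1} r_{n,1} λ^n be fixed relatively prime polynomials with r_{l,0} ≠ 0, r_{l−1,1} ≠ 0 and r_{l,0} ≠ r_{l−1,1}; let a_1,…,a_l, b_1,…,b_l be fixed with a_n ≠ 0 for n = 1,…,l−1 and a_l = 1, and let λ_1,…,λ_{2l−1} be the eigenvalues of the corresponding problem. Then there exist ε > 0 and C > 0, depending only on R_0, R_1, {a_n}, {b_n}, such that for any complex numbers λ̃_1,…,λ̃_{2l−1} and any polynomials R̃_0 = Σ_{n=0}^{l} r̃_{n,0} λ^n, R̃_1 = Σ_{n=0}^{l−1} r̃_{n,1} λ^n satisfying δ := max_{1 ≤ j ≤ 2l−1} |λ_j − λ̃_j| + max_{n, j∈{0,1}} |r_{n,j} − r̃_{n,j}| ≤ ε, there exist unique complex numbers ã_1,…,ã_l, b̃_1,…,b̃_l with ã_n ≠ 0 for n = 1,…,l−1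 and ã_l = 1, such that λ̃_1,…,λ̃_{2l−1} are the eigenvalues (zeros with multiplicity of R̃_0 ṽ_1 − R̃_1 ṽ_0, where [ṽ_n] solves the difference equation with coefficients (ã_n, b̃_n) and ṽ_{l+1} = 0, ṽ_l = 1) of the perturbed problem; moreover |a_n − ã_n| ≤ Cδ and |b_n − b̃_n| ≤ Cδ for n = 1,…,l. -/
open Polynomial

/-- `E` is the characteristic polynomial of the boundary value problem
`a n * y (n+1) + b n * y n + y (n-1) = λ y n` (`n = 1,…,l`), `R0(λ) y 1 - R1(λ) y 0 = 0`,
`y (l+1) = 0`: that is, `E = R0 * v 1 - R1 * v 0`, where `v` is the polynomial solution of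
the difference equation with `v (l+1) = 0`, `v l = 1`. -/
def IsCharPoly (l : ℕ) (a b : ℕ → ℂ) (R0 R1 E : Polynomial ℂ) : Prop :=
  ∃ v : ℕ → Polynomial ℂ, v (l + 1) = 0 ∧ v l = 1 ∧
    (∀ n, 1 ≤ n → n ≤ l →
      v (n - 1) = (X - C (b n)) * v n - C (a n) * v (n + 1)) ∧
    R0 * v 1 - R1 * v 0 = E

namespace InvProb

/-! ### Coefficientwise differentiable families of polynomials -/

section DP
variable {P : Type*} [NormedAddCommGroup P] [NormedSpace ℂ P] {x0 : P}

def DP (x0 : P) (f : P → ℂ[X]) : Prop :=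
  ∀ n, DifferentiableAt ℂ (fun x => (f x).coeff n) x0

lemma DP.const (p : ℂ[X]) : DP x0 (fun _ => p) := fun _ => differentiableAt_const _

lemma DP.C {f : P → ℂ} (hf : DifferentiableAt ℂ f x0) : DP x0 (fun x => C (f x)) := by
  intro n
  by_cases h : n = 0
  · simpa [coeff_C, h] using hf
  · simp [coeff_C, h]

lemma DP.add {f g : P → ℂ[X]} (hf : DP x0 f) (hg : DP x0 g) : DP x0 (fun x => f x + g x) := by
  intro n
  simp only [coeff_add]
  exact (hf n).add (hg n)

lemma DP.sub {f g : P → ℂ[X]} (hf : DP x0 f) (hg : DP x0 g) : DP x0 (fun x => f x - g x) := by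
  intro n
  simp only [coeff_sub]
  exact (hf n).sub (hg n)

lemma DP.neg {f : P → ℂ[X]} (hf : DP x0 f) : DP x0 (fun x => - f x) := by
  intro n
  simpa using (hf n).neg

lemma DP.mul {f g : P → ℂ[X]} (hf : DP x0 f) (hg : DP x0 g) : DP x0 (fun x => f x * g x) := by
  intro n
  simp only [coeff_mul]
  exact DifferentiableAt.fun_sum fun i _ => (hf _).mul (hg _)

lemma DP.sum {ι : Type*} (s : Finset ι) {f : ι → P → ℂ[X]} (hf : ∀ i ∈ s, DP x0 (f i)) :
    DP x0 (fun x => ∑ i ∈ s, f i x) := by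
  intro n
  simp only [finsetSum_coeff]
  exact DifferentiableAt.fun_sum fun i hi => hf i hi n

lemma DP.prod {ι : Type*} (s : Finset ι) {f : ι → P → ℂ[X]} (hf : ∀ i ∈ s, DP x0 (f i)) :
    DP x0 (fun x => ∏ i ∈ s, f i x) := by
  classical
  induction s using Finset.induction_on with
  | empty => simpa using DP.const 1
  | insert i s hi ih =>
    simp only [Finset.prod_insert hi]
    exact (hf i (by simp)).mul (ih fun j hj => hf j (by simp [hj]))

lemma diff_prod {ι : Type*} (s : Finset ι) {f : ι → P → ℂ}
    (hf : ∀ i ∈ s, DifferentiableAt ℂ (f i) x0) :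
    DifferentiableAt ℂ (fun x => ∏ i ∈ s, f i x) x0 := by
  classical
  induction s using Finset.induction_on with
  | empty => simp
  | insert i s hi ih =>
    simp only [Finset.prod_insert hi]
    exact (hf i (by simp)).mul (ih fun j hj => hf j (by simp [hj]))

lemma diff_det {k : Type*} [Fintype k] [DecidableEq k] {A : P → Matrix k k ℂ}
    (hA : ∀ i j, DifferentiableAt ℂ (fun x => A x i j) x0) :
    DifferentiableAt ℂ (fun x => (A x).det) x0 := by
  simp only [Matrix.det_apply]
  refine DifferentiableAt.fun_sum fun σ _ => ?_
  refine DifferentiableAt.fun_const_smul (c := Equiv.Perm.sign σ) ?_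
  exact diff_prod Finset.univ fun i _ => hA _ _

lemma diff_adj {k : Type*} [Fintype k] [DecidableEq k] {A : P → Matrix k k ℂ}
    (hA : ∀ i j, DifferentiableAt ℂ (fun x => A x i j) x0) (i j : k) :
    DifferentiableAt ℂ (fun x => (A x).adjugate i j) x0 := by
  simp only [Matrix.adjugate_apply]
  refine diff_det fun s t => ?_
  simp only [Matrix.updateRow_apply]
  split_ifs
  · exact differentiableAt_const _
  · exact hA _ _

lemma diff_sylv {f g : P → ℂ[X]} (hf : DP x0 f) (hg : DP x0 g) (m n : ℕ) (i j : Fin (m + n)) :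
    DifferentiableAt ℂ (fun x => sylvester (f x) (g x) m n i j) x0 := by
  induction j using Fin.addCases with
  | left j =>
    simp only [sylvester, Matrix.of_apply, Fin.addCases_left]
    split_ifs
    · exact hg _
    · exact differentiableAt_const _
  | right j =>
    simp only [sylvester, Matrix.of_apply, Fin.addCases_right]
    split_ifs
    · exact hf _
    · exact differentiableAt_const _

/-! ### Solving the linear system -/

noncomputable def sol (f g : ℂ[X]) (m n : ℕ) (G : ℂ[X]) (i : Fin (m + n)) : ℂ :=
  (f.resultant g m n)⁻¹ * ∑ j, (sylvester f g m n).adjugate i j * G.coeff j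

noncomputable def sol1 (f g : ℂ[X]) (m n : ℕ) (G : ℂ[X]) : ℂ[X] :=
  ∑ i : Fin m, C (sol f g m n G (i.castAdd n)) * X ^ (i : ℕ)

noncomputable def sol2 (f g : ℂ[X]) (m n : ℕ) (G : ℂ[X]) : ℂ[X] :=
  ∑ i : Fin n, C (sol f g m n G (i.natAdd m)) * X ^ (i : ℕ)

lemma diff_sol {f g G : P → ℂ[X]} (hf : DP x0 f) (hg : DP x0 g) (hG : DP x0 G) (m n : ℕ)
    (h0 : (f x0).resultant (g x0) m n ≠ 0) (i : Fin (m + n)) :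
    DifferentiableAt ℂ (fun x => sol (f x) (g x) m n (G x) i) x0 := by
  unfold sol
  refine DifferentiableAt.mul (DifferentiableAt.inv ?_ h0) ?_
  · exact diff_det (diff_sylv hf hg m n)
  · exact DifferentiableAt.fun_sum fun j _ => (diff_adj (diff_sylv hf hg m n) _ _).mul (hG _)

lemma sol_eq (f g : ℂ[X]) (m n : ℕ) (G : ℂ[X]_(m + n)) :
    ((f.resultant g m n)⁻¹ • adjSylvester (m := m) (n := n) f g G).1.1 = sol1 f g m n G ∧
    ((f.resultant g m n)⁻¹ • adjSylvester (m := m) (n := n) f g G).2.1 = sol2 f g m n G := by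
  have key : ∀ i, (((degreeLT.basis ℂ m).prod (degreeLT.basis ℂ n)).reindex finSumFinEquiv).repr
      ((f.resultant g m n)⁻¹ • adjSylvester (m := m) (n := n) f g G) i = sol f g m n G i := by
    intro i
    rw [map_smul, Finsupp.smul_apply, adjSylvester]
    generalize ((degreeLT.basis ℂ m).prod (degreeLT.basis ℂ n)).reindex finSumFinEquiv = B
    rw [Matrix.repr_toLin]
    simp [sol, Matrix.mulVec, dotProduct]
  generalize ((f.resultant g m n)⁻¹ • adjSylvester (m := m) (n := n) f g G) = Y at key
  constructor
  · conv_lhs => rw [← (degreeLT.basis ℂ m).sum_repr Y.1]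
    simp only [sol1, ← key]
    simp [smul_eq_C_mul]
  · conv_lhs => rw [← (degreeLT.basis ℂ n).sum_repr Y.2]
    simp only [sol2, ← key]
    simp [smul_eq_C_mul]

lemma sol_spec (f g : ℂ[X]) (m n : ℕ) (hf : f.natDegree ≤ m) (hg : g.natDegree ≤ n)
    (h0 : f.resultant g m n ≠ 0) (G : ℂ[X]) (hG : G ∈ degreeLT ℂ (m + n)) :
    sol1 f g m n G ∈ degreeLT ℂ m ∧ sol2 f g m n G ∈ degreeLT ℂ n ∧
    f * sol2 f g m n G + g * sol1 f g m n G = G ∧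
    ∀ q p, q ∈ degreeLT ℂ m → p ∈ degreeLT ℂ n → f * p + g * q = G →
      q = sol1 f g m n G ∧ p = sol2 f g m n G := by
  obtain ⟨h1, h2⟩ := sol_eq f g m n ⟨G, hG⟩
  simp only at h1 h2
  rw [← h1, ← h2]
  refine ⟨Subtype.property _, Subtype.property _, ?_, ?_⟩
  · have h3 : sylvesterMap f g hf hg
        ((f.resultant g m n)⁻¹ • adjSylvester (m := m) (n := n) f g ⟨G, hG⟩) = ⟨G, hG⟩ := by
      rw [map_smul]
      have := congrArg (fun L => L ⟨G, hG⟩) (sylveserMap_comp_adjSylvester f g hf hg)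
      simp only [LinearMap.comp_apply] at this
      rw [this]
      simp only [LinearMap.smul_apply, LinearMap.id_apply]
      rw [smul_smul, inv_mul_cancel₀ h0, one_smul]
    exact congrArg Subtype.val h3
  · intro q p hq hp h
    have h3 : sylvesterMap f g hf hg (⟨q, hq⟩, ⟨p, hp⟩) = ⟨G, hG⟩ := Subtype.ext h
    have := congrArg (fun L => L (⟨q, hq⟩, ⟨p, hp⟩)) (adjSylvester_comp_sylveserMap f g hf hg)
    simp only [LinearMap.comp_apply] at this
    rw [h3] at this
    rw [this]
    simp only [LinearMap.smul_apply, LinearMap.id_apply]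
    rw [smul_smul, inv_mul_cancel₀ h0, one_smul]
    exact ⟨rfl, rfl⟩

end DP

/-! ### The Euclidean recursion -/

def MD (d : ℕ) (p : ℂ[X]) : Prop := p.coeff d = 1 ∧ ∀ m, d < m → p.coeff m = 0

noncomputable def bS (k : ℕ) (q p : ℂ[X]) : ℂ := (X * p).coeff k - q.coeff k
noncomputable def uS (k : ℕ) (q p : ℂ[X]) : ℂ[X] := (X - C (bS k q p)) * p - q
noncomputable def aS (k : ℕ) (q p : ℂ[X]) : ℂ := (X * uS k q p).coeff k
noncomputable def rS (k : ℕ) (q p : ℂ[X]) : ℂ[X] := C (aS k q p)⁻¹ * uS k q p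

noncomputable def W (l : ℕ) (q p : ℂ[X]) : ℕ → ℂ[X] × ℂ[X]
  | 0 => (q, p)
  | n + 1 => ((W l q p n).2, rS (l - 1 - n) (W l q p n).1 (W l q p n).2)

noncomputable def bW (l : ℕ) (q p : ℂ[X]) (n : ℕ) : ℂ :=
  bS (l - 1 - n) (W l q p n).1 (W l q p n).2
noncomputable def aW (l : ℕ) (q p : ℂ[X]) (n : ℕ) : ℂ :=
  aS (l - 1 - n) (W l q p n).1 (W l q p n).2

lemma MD_step {k : ℕ} {p r : ℂ[X]} (a b : ℂ) (hp : MD k p) (hr : ∀ m, k ≤ m → r.coeff m = 0) :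
    MD (k + 1) ((X - C b) * p - C a * r) := by
  constructor
  · simp [sub_mul, hp.1, hp.2 (k + 1) (by omega), hr (k + 1) (by omega)]
  · intro m hm
    obtain ⟨m, rfl⟩ : ∃ j, m = j + 1 := ⟨m - 1, by omega⟩
    simp [sub_mul, hp.2 m (by omega), hp.2 (m + 1) (by omega), hr (m + 1) (by omega)]

lemma chain_MD {l : ℕ} {a b : ℕ → ℂ} {v : ℕ → ℂ[X]} (h1 : v (l + 1) = 0) (h2 : v l = 1)
    (h3 : ∀ n, 1 ≤ n → n ≤ l → v (n - 1) = (X - C (b n)) * v n - C (a n) * v (n + 1)) :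
    ∀ k, k ≤ l → MD k (v (l - k)) ∧ ∀ m, k ≤ m → (v (l - k + 1)).coeff m = 0 := by
  intro k
  induction k with
  | zero =>
    intro _
    simp only [Nat.sub_zero, h1, h2]
    refine ⟨⟨by simp, fun m hm => ?_⟩, by simp⟩
    simp [coeff_one, hm.ne']
  | succ k ih =>
    intro hk
    obtain ⟨i1, i2⟩ := ih (by omega)
    have e1 : l - (k + 1) = l - k - 1 := by omega
    have e2 : l - k - 1 + 1 = l - k := by omega
    rw [e1, e2, h3 (l - k) (by omega) (by omega)]
    exact ⟨MD_step _ _ i1 i2, fun m hm => i1.2 m (by omega)⟩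

lemma bS_eq {k : ℕ} {p q r : ℂ[X]} {a b : ℂ} (hp : MD k p) (hr : ∀ m, k ≤ m → r.coeff m = 0)
    (hq : q = (X - C b) * p - C a * r) : bS k q p = b := by
  simp [bS, hq, sub_mul, hp.1, hr k le_rfl]

lemma aS_eq {k : ℕ} {p q r : ℂ[X]} {a b : ℂ} (hp : MD (k + 1) p) (hr : MD k r)
    (hq : q = (X - C b) * p - C a * r) : aS (k + 1) q p = a := by
  have hb := bS_eq hp (fun m hm => hr.2 m (by omega)) hq
  have : uS (k + 1) q p = C a * r := by rw [uS, hb, hq]; ring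
  simp [aS, this, hr.1]

lemma rS_eq {k : ℕ} {p q r : ℂ[X]} {a b : ℂ} (hp : MD (k + 1) p) (hr : MD k r) (ha : a ≠ 0)
    (hq : q = (X - C b) * p - C a * r) : rS (k + 1) q p = r := by
  have hb := bS_eq hp (fun m hm => hr.2 m (by omega)) hq
  have : uS (k + 1) q p = C a * r := by rw [uS, hb, hq]; ring
  rw [rS, aS_eq hp hr hq, this, ← mul_assoc, ← C_mul, inv_mul_cancel₀ ha, C_1, one_mul]

lemma chain_unique {l : ℕ} {a b : ℕ → ℂ} {v : ℕ → ℂ[X]} (h1 : v (l + 1) = 0) (h2 : v l = 1)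
    (h3 : ∀ n, 1 ≤ n → n ≤ l → v (n - 1) = (X - C (b n)) * v n - C (a n) * v (n + 1))
    (ha : ∀ n, 1 ≤ n → n ≤ l - 1 → a n ≠ 0) :
    ∀ n, n < l → W l (v 0) (v 1) n = (v n, v (n + 1)) := by
  have hM := chain_MD h1 h2 h3
  intro n
  induction n with
  | zero => intro _; rfl
  | succ n ih =>
    intro hn
    have ih := ih (by omega)
    rw [W, ih]
    simp only
    have e : l - 1 - n = (l - (n + 2)) + 1 := by omega
    have m1 := (hM (l - (n + 2) + 1) (by omega)).1
    have m2 := (hM (l - (n + 2)) (by omega)).1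
    rw [show l - (l - (n + 2) + 1) = n + 1 by omega] at m1
    rw [show l - (l - (n + 2)) = n + 2 by omega] at m2
    have := rS_eq m1 m2 (ha (n + 1) (by omega) (by omega)) (h3 (n + 1) (by omega) (by omega))
    rw [e]
    simpa using this

lemma chain_coeff {l : ℕ} {a b : ℕ → ℂ} {v : ℕ → ℂ[X]} (h1 : v (l + 1) = 0) (h2 : v l = 1)
    (h3 : ∀ n, 1 ≤ n → n ≤ l → v (n - 1) = (X - C (b n)) * v n - C (a n) * v (n + 1))
    (ha : ∀ n, 1 ≤ n → n ≤ l - 1 → a n ≠ 0) :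
    (∀ n, n < l → bW l (v 0) (v 1) n = b (n + 1)) ∧
    (∀ n, n + 1 < l → aW l (v 0) (v 1) n = a (n + 1)) := by
  have hM := chain_MD h1 h2 h3
  have hW := chain_unique h1 h2 h3 ha
  constructor
  · intro n hn
    rw [bW, hW n hn]
    obtain ⟨m1, m2⟩ := hM (l - 1 - n) (by omega)
    rw [show l - (l - 1 - n) = n + 1 by omega] at m1 m2
    exact bS_eq m1 m2 (by simpa using h3 (n + 1) (by omega) (by omega))
  · intro n hn
    rw [aW, hW n (by omega)]
    have e : l - 1 - n = (l - (n + 2)) + 1 := by omega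
    have m1 := (hM (l - (n + 2) + 1) (by omega)).1
    have m2 := (hM (l - (n + 2)) (by omega)).1
    rw [show l - (l - (n + 2) + 1) = n + 1 by omega] at m1
    rw [show l - (l - (n + 2)) = n + 2 by omega] at m2
    rw [e]
    exact aS_eq m1 m2 (by simpa using h3 (n + 1) (by omega) (by omega))

lemma uS_coeff {k : ℕ} {q p : ℂ[X]} (hq : MD (k + 1) q) (hp : MD k p) :
    ∀ m, k ≤ m → (uS k q p).coeff m = 0 := by
  intro m hm
  rcases eq_or_lt_of_le hm with rfl | hm
  · simp [uS, sub_mul, hp.1, bS]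
  · obtain ⟨m, rfl⟩ : ∃ j, m = j + 1 := ⟨m - 1, by omega⟩
    rcases eq_or_lt_of_le (show k ≤ m by omega) with rfl | h
    · simp [uS, sub_mul, hp.1, hq.1, hp.2 (k + 1) (by omega)]
    · simp [uS, sub_mul, hp.2 m h, hp.2 (m + 1) (by omega), hq.2 (m + 1) (by omega)]

lemma rS_MD {k : ℕ} {q p : ℂ[X]} (hq : MD (k + 2) q) (hp : MD (k + 1) p)
    (ha : aS (k + 1) q p ≠ 0) : MD k (rS (k + 1) q p) := by
  have hu := uS_coeff hq hp
  constructor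
  · have : aS (k + 1) q p = (uS (k + 1) q p).coeff k := by simp [aS]
    rw [rS, coeff_C_mul, ← this, inv_mul_cancel₀ ha]
  · intro m hm
    rw [rS, coeff_C_mul, hu m (by omega), mul_zero]

lemma W_MD {l : ℕ} {q p : ℂ[X]} (hq : MD l q) (hp : MD (l - 1) p)
    (ha : ∀ n, n + 1 < l → aW l q p n ≠ 0) :
    ∀ n, n < l → MD (l - n) (W l q p n).1 ∧ MD (l - 1 - n) (W l q p n).2 := by
  intro n
  induction n with
  | zero => intro _; exact ⟨hq, hp⟩
  | succ n ih =>
    intro hn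
    obtain ⟨i1, i2⟩ := ih (by omega)
    refine ⟨by simpa only [W, show l - (n + 1) = l - 1 - n by omega] using i2, ?_⟩
    have := ha n hn
    rw [aW] at this
    simp only [W]
    rw [show l - 1 - n = (l - 1 - (n + 1)) + 1 by omega] at this i2 ⊢
    rw [show l - n = (l - 1 - (n + 1)) + 2 by omega] at i1
    exact rS_MD i1 i2 this

lemma chain_exists {l : ℕ} {q p : ℂ[X]} (hl : 1 ≤ l) (hq : MD l q) (hp : MD (l - 1) p)
    (ha : ∀ n, n + 1 < l → aW l q p n ≠ 0) (R0 R1 : ℂ[X]) :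
    IsCharPoly l (fun n => if n = l then 1 else aW l q p (n - 1)) (fun n => bW l q p (n - 1))
      R0 R1 (R0 * p - R1 * q) := by
  have hM := W_MD hq hp ha
  have hz : ∀ n, (W l q p (n + 1)).1 = (W l q p n).2 := fun n => rfl
  refine ⟨fun n => if n = l + 1 then 0 else (W l q p n).1, by simp, ?_, ?_, ?_⟩
  · have := (hM (l - 1) (by omega)).2
    rw [← hz, show l - 1 + 1 = l by omega, Nat.sub_self] at this
    simp only [Nat.left_eq_add, one_ne_zero, if_false]
    ext m
    rcases Nat.eq_zero_or_pos m with rfl | hm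
    · simpa using this.1
    · rw [this.2 m hm, coeff_one, if_neg hm.ne']
  · intro n h1 hn
    obtain ⟨n, rfl⟩ : ∃ j, n = j + 1 := ⟨n - 1, by omega⟩
    simp only [Nat.add_sub_cancel]
    rw [if_neg (by omega), if_neg (by omega), hz]
    obtain ⟨i1, i2⟩ := hM n (by omega)
    rw [show l - n = (l - 1 - n) + 1 by omega] at i1
    have hu := uS_coeff i1 i2
    have e : (W l q p n).1 = (X - C (bW l q p n)) * (W l q p n).2 -
        uS (l - 1 - n) (W l q p n).1 (W l q p n).2 := by rw [uS, bW]; ring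
    by_cases h : n + 1 = l
    · rw [if_pos (show n + 1 + 1 = l + 1 by omega), mul_zero, sub_zero]
      have : uS (l - 1 - n) (W l q p n).1 (W l q p n).2 = 0 := by
        ext m; rw [hu m (by omega), coeff_zero]
      rwa [this, sub_zero] at e
    · rw [if_neg (show ¬ n + 1 + 1 = l + 1 by omega), if_neg h]
      have h0 := ha n (by omega)
      have : C (aW l q p n) * (W l q p (n + 1 + 1)).1
          = uS (l - 1 - n) (W l q p n).1 (W l q p n).2 := by
        rw [hz]
        simp only [W, rS]
        rw [← mul_assoc, ← C_mul]
        change C (aW l q p n * (aW l q p n)⁻¹) * _ = _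
        rw [mul_inv_cancel₀ h0, C_1, one_mul]
      rw [this]
      exact e
  · simp only
    rw [if_neg (by omega), if_neg (by omega)]
    rfl

section
variable {P : Type*} [NormedAddCommGroup P] [NormedSpace ℂ P] {x0 : P}

lemma DP.bS {q p : P → ℂ[X]} (hq : DP x0 q) (hp : DP x0 p) (k : ℕ) :
    DifferentiableAt ℂ (fun x => bS k (q x) (p x)) x0 :=
  (((DP.const X).mul hp) k).sub (hq k)

lemma DP.uS {q p : P → ℂ[X]} (hq : DP x0 q) (hp : DP x0 p) (k : ℕ) :
    DP x0 (fun x => uS k (q x) (p x)) :=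
  (((DP.const X).sub (DP.C (hq.bS hp k))).mul hp).sub hq

lemma DP.aS {q p : P → ℂ[X]} (hq : DP x0 q) (hp : DP x0 p) (k : ℕ) :
    DifferentiableAt ℂ (fun x => aS k (q x) (p x)) x0 :=
  ((DP.const X).mul (hq.uS hp k)) k

lemma DP.rS {q p : P → ℂ[X]} (hq : DP x0 q) (hp : DP x0 p) (k : ℕ)
    (h0 : InvProb.aS k (q x0) (p x0) ≠ 0) :
    DP x0 (fun x => rS k (q x) (p x)) :=
  (DP.C ((hq.aS hp k).inv h0)).mul (hq.uS hp k)

lemma DP.W {l : ℕ} {q p : P → ℂ[X]} (hq : DP x0 q) (hp : DP x0 p)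
    (ha : ∀ n, n + 1 < l → aW l (q x0) (p x0) n ≠ 0) :
    ∀ n, n < l → DP x0 (fun x => (W l (q x) (p x) n).1) ∧
      DP x0 (fun x => (W l (q x) (p x) n).2) := by
  intro n
  induction n with
  | zero => intro _; exact ⟨hq, hp⟩
  | succ n ih =>
    intro hn
    obtain ⟨i1, i2⟩ := ih (by omega)
    exact ⟨i2, i1.rS i2 _ (ha n hn)⟩

lemma MD_X_pow_add {k : ℕ} {q : ℂ[X]} (hq : q ∈ degreeLT ℂ k) : MD k (X ^ k + q) := by
  rw [mem_degreeLT, degree_lt_iff_coeff_zero] at hq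
  refine ⟨by simp [hq k le_rfl], fun m hm => ?_⟩
  simp [hq m hm.le, coeff_X_pow, hm.ne']

lemma MD_sub {k : ℕ} {q : ℂ[X]} (hq : MD k q) : q - X ^ k ∈ degreeLT ℂ k := by
  rw [mem_degreeLT, degree_lt_iff_coeff_zero]
  intro m hm
  rcases eq_or_lt_of_le hm with rfl | hm
  · simp [hq.1]
  · simp [hq.2 m hm, coeff_X_pow, hm.ne']

noncomputable def GG (l : ℕ) (r0 r1 e : ℂ[X]) : ℂ[X] := e - r0 * X ^ (l - 1) + r1 * X ^ l
noncomputable def QQ (l : ℕ) (r0 r1 e : ℂ[X]) : ℂ[X] :=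
  X ^ l + sol1 r0 (-r1) l (l - 1) (GG l r0 r1 e)
noncomputable def PP (l : ℕ) (r0 r1 e : ℂ[X]) : ℂ[X] :=
  X ^ (l - 1) + sol2 r0 (-r1) l (l - 1) (GG l r0 r1 e)

lemma PQ_spec {l : ℕ} (hl : 1 ≤ l) {r0 r1 e : ℂ[X]} (h0 : r0.natDegree ≤ l)
    (h1 : r1.natDegree ≤ l - 1) (he1 : e.coeff (2 * l - 1) = r0.coeff l - r1.coeff (l - 1))
    (he2 : ∀ m, 2 * l - 1 < m → e.coeff m = 0) (hres : r0.resultant (-r1) l (l - 1) ≠ 0) :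
    MD l (QQ l r0 r1 e) ∧ MD (l - 1) (PP l r0 r1 e) ∧
    r0 * PP l r0 r1 e - r1 * QQ l r0 r1 e = e ∧
    ∀ q p, MD l q → MD (l - 1) p → r0 * p - r1 * q = e → q = QQ l r0 r1 e ∧ p = PP l r0 r1 e := by
  have hG : GG l r0 r1 e ∈ degreeLT ℂ (l + (l - 1)) := by
    rw [mem_degreeLT, degree_lt_iff_coeff_zero]
    intro m hm
    rw [GG, coeff_add, coeff_sub, coeff_mul_X_pow', coeff_mul_X_pow', if_pos (by omega),
      if_pos (by omega)]
    rcases eq_or_lt_of_le hm with rfl | hm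
    · rw [show l + (l - 1) - (l - 1) = l by omega, show l + (l - 1) - l = l - 1 by omega,
        show l + (l - 1) = 2 * l - 1 by omega, he1]
      ring
    · rw [he2 m (by omega), coeff_eq_zero_of_natDegree_lt (p := r0) (by omega),
        coeff_eq_zero_of_natDegree_lt (p := r1) (by omega)]
      ring
  obtain ⟨s1, s2, s3, s4⟩ := sol_spec r0 (-r1) l (l - 1) h0 (by simpa using h1) hres _ hG
  refine ⟨MD_X_pow_add s1, MD_X_pow_add s2, ?_, ?_⟩
  · have : e = GG l r0 r1 e + r0 * X ^ (l - 1) - r1 * X ^ l := by rw [GG]; ring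
    rw [← s3] at this
    rw [PP, QQ]
    conv_rhs => rw [this]
    ring
  · intro q p hq hp h
    obtain ⟨t1, t2⟩ := s4 _ _ (MD_sub hq) (MD_sub hp) (by rw [GG, ← h]; ring)
    rw [QQ, PP, ← t1, ← t2]
    constructor <;> ring

lemma DP_PQ {l : ℕ} {r0 r1 e : P → ℂ[X]} (h0 : DP x0 r0) (h1 : DP x0 r1) (he : DP x0 e)
    (hres : (r0 x0).resultant (-(r1 x0)) l (l - 1) ≠ 0) :
    DP x0 (fun x => QQ l (r0 x) (r1 x) (e x)) ∧ DP x0 (fun x => PP l (r0 x) (r1 x) (e x)) := by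
  have hG : DP x0 (fun x => GG l (r0 x) (r1 x) (e x)) :=
    (he.sub (h0.mul (DP.const _))).add (h1.mul (DP.const _))
  have hs := diff_sol h0 h1.neg hG l (l - 1) hres
  constructor
  · exact (DP.const _).add (DP.sum _ fun i _ => (DP.C (hs _)).mul (DP.const _))
  · exact (DP.const _).add (DP.sum _ fun i _ => (DP.C (hs _)).mul (DP.const _))

lemma key {l : ℕ} (hl : 1 ≤ l) {r0 r1 e : P → ℂ[X]} (D0 : DP x0 r0) (D1 : DP x0 r1)
    (De : DP x0 e) (h0 : ∀ x, (r0 x).natDegree ≤ l) (h1 : ∀ x, (r1 x).natDegree ≤ l - 1)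
    (he1 : ∀ x, (e x).coeff (2 * l - 1) = (r0 x).coeff l - (r1 x).coeff (l - 1))
    (he2 : ∀ x m, 2 * l - 1 < m → (e x).coeff m = 0)
    (hres : (r0 x0).resultant (-(r1 x0)) l (l - 1) ≠ 0)
    (a b : ℕ → ℂ) (ha : ∀ n, 1 ≤ n → n ≤ l - 1 → a n ≠ 0) (hal : a l = 1)
    (hch : IsCharPoly l a b (r0 x0) (r1 x0) (e x0)) :
    ∃ ε > (0 : ℝ), ∃ Cst > (0 : ℝ), ∀ x : P, ‖x - x0‖ ≤ ε →
      ∃ a' b' : ℕ → ℂ,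
        (∀ n, 1 ≤ n → n ≤ l - 1 → a' n ≠ 0) ∧ a' l = 1 ∧
        IsCharPoly l a' b' (r0 x) (r1 x) (e x) ∧
        (∀ n, 1 ≤ n → n ≤ l →
            ‖a n - a' n‖ ≤ Cst * ‖x - x0‖ ∧ ‖b n - b' n‖ ≤ Cst * ‖x - x0‖) ∧
        (∀ a'' b'' : ℕ → ℂ,
            (∀ n, 1 ≤ n → n ≤ l - 1 → a'' n ≠ 0) → a'' l = 1 →
            IsCharPoly l a'' b'' (r0 x) (r1 x) (e x) →
            ∀ n, 1 ≤ n → n ≤ l → a'' n = a' n ∧ b'' n = b' n) := by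
  set Q : P → ℂ[X] := fun x => QQ l (r0 x) (r1 x) (e x) with hQ
  set T : P → ℂ[X] := fun x => PP l (r0 x) (r1 x) (e x) with hT
  obtain ⟨DQ, DT⟩ := DP_PQ (l := l) D0 D1 De hres
  -- any solution of the problem at a good parameter comes from the recursion
  have uniq : ∀ x, (r0 x).resultant (-(r1 x)) l (l - 1) ≠ 0 → ∀ a'' b'' : ℕ → ℂ,
      (∀ n, 1 ≤ n → n ≤ l - 1 → a'' n ≠ 0) → IsCharPoly l a'' b'' (r0 x) (r1 x) (e x) →
      (∀ n, n < l → bW l (Q x) (T x) n = b'' (n + 1)) ∧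
      (∀ n, n + 1 < l → aW l (Q x) (T x) n = a'' (n + 1)) := by
    intro x hx a'' b'' ha'' ⟨v, v1, v2, v3, v4⟩
    have m0 := (chain_MD v1 v2 v3 l le_rfl).1
    have m1 := (chain_MD v1 v2 v3 (l - 1) (by omega)).1
    rw [Nat.sub_self] at m0
    rw [show l - (l - 1) = 1 by omega] at m1
    obtain ⟨e0, e1⟩ := (PQ_spec hl (h0 x) (h1 x) (he1 x) (he2 x) hx).2.2.2 _ _ m0 m1 v4
    have := chain_coeff v1 v2 v3 ha''
    rw [e0, e1] at this
    exact this
  obtain ⟨base_b, base_a⟩ := uniq x0 hres a b ha hch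
  have ha0 : ∀ n, n + 1 < l → aW l (Q x0) (T x0) n ≠ 0 := by
    intro n hn
    rw [base_a n hn]
    exact ha _ (by omega) (by omega)
  have DW := DP.W DQ DT ha0
  have Da : ∀ n, n < l → DifferentiableAt ℂ (fun x => aW l (Q x) (T x) n) x0 :=
    fun n hn => (DW n hn).1.aS (DW n hn).2 _
  have Db : ∀ n, n < l → DifferentiableAt ℂ (fun x => bW l (Q x) (T x) n) x0 :=
    fun n hn => (DW n hn).1.bS (DW n hn).2 _
  have DF : DifferentiableAt ℂ
      (fun x => fun n : Fin l => (aW l (Q x) (T x) n, bW l (Q x) (T x) n)) x0 :=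
    differentiableAt_pi.2 fun n => (Da n n.2).prodMk (Db n n.2)
  obtain ⟨K, hK, hO⟩ := DF.isBigO_sub.exists_pos
  have ev1 : ∀ᶠ x in nhds x0, (r0 x).resultant (-(r1 x)) l (l - 1) ≠ 0 :=
    (diff_det (diff_sylv D0 D1.neg l (l - 1))).continuousAt.eventually_ne hres
  have ev2 : ∀ᶠ x in nhds x0, ∀ n ∈ Finset.range (l - 1), aW l (Q x) (T x) n ≠ 0 := by
    rw [Filter.eventually_all_finset]
    intro n hn
    rw [Finset.mem_range] at hn
    exact (Da n (by omega)).continuousAt.eventually_ne (ha0 n (by omega))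
  obtain ⟨ε, hε, hball⟩ := Metric.eventually_nhds_iff.1 (ev1.and (ev2.and hO.bound))
  refine ⟨ε / 2, by positivity, K, hK, fun x hx => ?_⟩
  obtain ⟨g1, g2, g3⟩ := hball (show dist x x0 < ε by rw [dist_eq_norm]; linarith)
  have g2' : ∀ n, n + 1 < l → aW l (Q x) (T x) n ≠ 0 :=
    fun n hn => g2 n (Finset.mem_range.2 (by omega))
  obtain ⟨s1, s2, s3, -⟩ := PQ_spec hl (h0 x) (h1 x) (he1 x) (he2 x) g1
  have hex := chain_exists hl s1 s2 g2' (r0 x) (r1 x)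
  rw [s3] at hex
  have hbd : ∀ n, n < l → ‖aW l (Q x) (T x) n - aW l (Q x0) (T x0) n‖ ≤ K * ‖x - x0‖ ∧
      ‖bW l (Q x) (T x) n - bW l (Q x0) (T x0) n‖ ≤ K * ‖x - x0‖ := by
    intro n hn
    have := (norm_le_pi_norm _ (⟨n, hn⟩ : Fin l)).trans g3
    exact ⟨(norm_fst_le _).trans this, (norm_snd_le _).trans this⟩
  refine ⟨_, _, ?_, ?_, hex, ?_, ?_⟩
  · intro n hn1 hn2
    rw [if_neg (by omega)]
    exact g2' _ (by omega)
  · simp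
  · intro n hn1 hn2
    obtain ⟨n, rfl⟩ : ∃ j, n = j + 1 := ⟨n - 1, by omega⟩
    obtain ⟨c1, c2⟩ := hbd n (by omega)
    simp only [Nat.add_sub_cancel]
    rw [← base_b n (by omega), norm_sub_rev (bW l (Q x0) (T x0) n)]
    refine ⟨?_, c2⟩
    split_ifs with h
    · rw [h, hal, sub_self, norm_zero]; positivity
    · rw [← base_a n (by omega), norm_sub_rev]
      exact c1
  · intro a'' b'' ha'' hal'' hc n hn1 hn2
    obtain ⟨n, rfl⟩ : ∃ j, n = j + 1 := ⟨n - 1, by omega⟩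
    obtain ⟨u1, u2⟩ := uniq x g1 a'' b'' ha'' hc
    simp only [Nat.add_sub_cancel]
    refine ⟨?_, (u1 n (by omega)).symm⟩
    split_ifs with h
    · rw [h, hal'']
    · exact (u2 n (by omega)).symm

end

abbrev PS (l : ℕ) : Type :=
  (↥(Finset.Icc 1 (2 * l - 1)) → ℂ) × (↥(Finset.range (l + 1)) → ℂ) × (↥(Finset.range l) → ℂ)

end InvProb

/-- Theorem 3.3: local solvability and stability for the inverse problem with polynomials in
the boundary condition. Small perturbations of the eigenvalues and of the coefficients of the
polynomials `R0`, `R1` still produce a (unique) solvable inverse problem, and the recovered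
coefficients differ from the original ones by at most `C δ`. -/
theorem inverse_problem_local_solvability_stability (l : ℕ) (hl : 1 ≤ l)
    (R0 R1 : Polynomial ℂ)
    (hcop : IsCoprime R0 R1)
    (hR0d : R0.degree = (l : WithBot ℕ)) (hr0 : R0.coeff l ≠ 0)
    (hR1d : R1.degree = ((l - 1 : ℕ) : WithBot ℕ)) (hr1 : R1.coeff (l - 1) ≠ 0)
    (hne : R0.coeff l ≠ R1.coeff (l - 1))
    (a b : ℕ → ℂ)
    (ha : ∀ n, 1 ≤ n → n ≤ l - 1 → a n ≠ 0) (hal : a l = 1)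
    (Λ : ℕ → ℂ)
    (hΛ : IsCharPoly l a b R0 R1
      (C (R0.coeff l - R1.coeff (l - 1)) *
        ∏ j ∈ Finset.Icc 1 (2 * l - 1), (X - C (Λ j)))) :
    ∃ ε > (0 : ℝ), ∃ Cst > (0 : ℝ),
      ∀ (Λ' : ℕ → ℂ) (R0' R1' : Polynomial ℂ) (δ : ℝ),
        R0'.degree ≤ (l : WithBot ℕ) → R1'.degree ≤ ((l - 1 : ℕ) : WithBot ℕ) →
        δ ≤ ε →
        (∀ j, 1 ≤ j → j ≤ 2 * l - 1 → ‖Λ j - Λ' j‖ ≤ δ) →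
        (∀ n, n ≤ l → ‖R0.coeff n - R0'.coeff n‖ ≤ δ) →
        (∀ n, n ≤ l - 1 → ‖R1.coeff n - R1'.coeff n‖ ≤ δ) →
        ∃ a' b' : ℕ → ℂ,
          (∀ n, 1 ≤ n → n ≤ l - 1 → a' n ≠ 0) ∧ a' l = 1 ∧
          IsCharPoly l a' b' R0' R1'
            (C (R0'.coeff l - R1'.coeff (l - 1)) *
              ∏ j ∈ Finset.Icc 1 (2 * l - 1), (X - C (Λ' j))) ∧
          (∀ n, 1 ≤ n → n ≤ l →
            ‖a n - a' n‖ ≤ Cst * δ ∧ ‖b n - b' n‖ ≤ Cst * δ) ∧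
          (∀ a'' b'' : ℕ → ℂ,
            (∀ n, 1 ≤ n → n ≤ l - 1 → a'' n ≠ 0) → a'' l = 1 →
            IsCharPoly l a'' b'' R0' R1'
              (C (R0'.coeff l - R1'.coeff (l - 1)) *
                ∏ j ∈ Finset.Icc 1 (2 * l - 1), (X - C (Λ' j))) →
            ∀ n, 1 ≤ n → n ≤ l → a'' n = a' n ∧ b'' n = b' n) := by
  classical
  let r0 : InvProb.PS l → ℂ[X] := fun x => ∑ i, C (x.2.1 i) * X ^ (i : ℕ)
  let r1 : InvProb.PS l → ℂ[X] := fun x => ∑ i, C (x.2.2 i) * X ^ (i : ℕ)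
  let e : InvProb.PS l → ℂ[X] := fun x => C ((r0 x).coeff l - (r1 x).coeff (l - 1)) * ∏ j, (X - C (x.1 j))
  let mk : (ℕ → ℂ) → ℂ[X] → ℂ[X] → InvProb.PS l := fun L A B =>
    ((fun j => L j), (fun i => A.coeff i), fun i => B.coeff i)
  have hr0 : ∀ L A B, A.degree ≤ (l : WithBot ℕ) → r0 (mk L A B) = A := by
    intro L A B hA
    have := Finset.sum_coe_sort (Finset.range (l + 1)) (fun i => C (A.coeff i) * X ^ i)
    refine this.trans (A.as_sum_range_C_mul_X_pow' ?_).symm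
    have := natDegree_le_of_degree_le hA
    omega
  have hr1 : ∀ L A B, B.degree ≤ ((l - 1 : ℕ) : WithBot ℕ) → r1 (mk L A B) = B := by
    intro L A B hA
    have := Finset.sum_coe_sort (Finset.range l) (fun i => C (B.coeff i) * X ^ i)
    refine this.trans (B.as_sum_range_C_mul_X_pow' ?_).symm
    have := natDegree_le_of_degree_le hA
    omega
  have hem : ∀ L A B, A.degree ≤ (l : WithBot ℕ) → B.degree ≤ ((l - 1 : ℕ) : WithBot ℕ) →
      e (mk L A B) = C (A.coeff l - B.coeff (l - 1)) *
        ∏ j ∈ Finset.Icc 1 (2 * l - 1), (X - C (L j)) := by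
    intro L A B hA hB
    have := Finset.prod_coe_sort (Finset.Icc 1 (2 * l - 1)) (fun j => (X - C (L j)))
    simp only [e, hr0 L A B hA, hr1 L A B hB]
    rw [← this]
  set x0 : InvProb.PS l := mk Λ R0 R1 with hx0
  have D0 : InvProb.DP x0 r0 := InvProb.DP.sum _ fun i _ =>
    (InvProb.DP.C (by fun_prop)).mul (InvProb.DP.const _)
  have D1 : InvProb.DP x0 r1 := InvProb.DP.sum _ fun i _ =>
    (InvProb.DP.C (by fun_prop)).mul (InvProb.DP.const _)
  have De : InvProb.DP x0 e := (InvProb.DP.C ((D0 _).sub (D1 _))).mul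
    (InvProb.DP.prod _ fun i _ => (InvProb.DP.const _).sub (InvProb.DP.C (by fun_prop)))
  have n0 : ∀ x, (r0 x).natDegree ≤ l := by
    intro x
    refine natDegree_sum_le_of_forall_le _ _ fun i _ => (natDegree_C_mul_X_pow_le _ _).trans ?_
    have := Finset.mem_range.1 i.2
    omega
  have n1 : ∀ x, (r1 x).natDegree ≤ l - 1 := by
    intro x
    refine natDegree_sum_le_of_forall_le _ _ fun i _ => (natDegree_C_mul_X_pow_le _ _).trans ?_
    have := Finset.mem_range.1 i.2
    omega
  have pm : ∀ x : InvProb.PS l, (∏ j, (X - C (x.1 j))).Monic := fun x =>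
    monic_prod_of_monic _ _ fun j _ => monic_X_sub_C _
  have pd : ∀ x : InvProb.PS l, (∏ j, (X - C (x.1 j))).natDegree = 2 * l - 1 := by
    intro x
    rw [natDegree_prod_of_monic _ _ fun j _ => monic_X_sub_C _]
    simp
  have he1 : ∀ x, (e x).coeff (2 * l - 1) = (r0 x).coeff l - (r1 x).coeff (l - 1) := by
    intro x
    have := (pm x).coeff_natDegree
    rw [pd x] at this
    simp only [e, coeff_C_mul]
    rw [this, mul_one]
  have he2 : ∀ x m, 2 * l - 1 < m → (e x).coeff m = 0 := by
    intro x m hm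
    simp only [e, coeff_C_mul]
    rw [coeff_eq_zero_of_natDegree_lt (p := ∏ j, (X - C (x.1 j))) (by rw [pd x]; exact hm),
      mul_zero]
  have b0 : r0 x0 = R0 := hr0 _ _ _ hR0d.le
  have b1 : r1 x0 = R1 := hr1 _ _ _ hR1d.le
  have hres : (r0 x0).resultant (-(r1 x0)) l (l - 1) ≠ 0 := by
    rw [b0, b1]
    have := resultant_ne_zero R0 (-R1) hcop.neg_right
    rwa [natDegree_neg, natDegree_eq_of_degree_eq_some hR0d,
      natDegree_eq_of_degree_eq_some hR1d] at this
  obtain ⟨ε, hε, K, hK, H⟩ := InvProb.key hl D0 D1 De n0 n1 he1 he2 hres a b ha hal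
    (by rw [b0, b1, hx0, hem _ _ _ hR0d.le hR1d.le]; exact hΛ)
  refine ⟨ε, hε, K, hK, ?_⟩
  intro Λ' R0' R1' δ d0 d1 hδ hL hA hB
  have hδ0 : 0 ≤ δ := (norm_nonneg _).trans (hL 1 le_rfl (by omega))
  have hn : ‖mk Λ' R0' R1' - x0‖ ≤ δ := by
    refine norm_prod_le_iff.2 ⟨?_, norm_prod_le_iff.2 ⟨?_, ?_⟩⟩
    · refine (pi_norm_le_iff_of_nonneg hδ0).2 fun j => ?_
      have := Finset.mem_Icc.1 j.2
      have := hL j this.1 this.2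
      rwa [norm_sub_rev] at this
    · refine (pi_norm_le_iff_of_nonneg hδ0).2 fun j => ?_
      have := Finset.mem_range.1 j.2
      have := hA j (by omega)
      rwa [norm_sub_rev] at this
    · refine (pi_norm_le_iff_of_nonneg hδ0).2 fun j => ?_
      have := Finset.mem_range.1 j.2
      have := hB j (by omega)
      rwa [norm_sub_rev] at this
  obtain ⟨a', b', c1, c2, c3, c4, c5⟩ := H (mk Λ' R0' R1') (hn.trans hδ)
  rw [hr0 _ _ _ d0, hr1 _ _ _ d1, hem _ _ _ d0 d1] at c3 c5
  refine ⟨a', b', c1, c2, c3, fun n h1 h2 => ?_, c5⟩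
  obtain ⟨c6, c7⟩ := c4 n h1 h2
  have : K * ‖mk Λ' R0' R1' - x0‖ ≤ K * δ := mul_le_mul_of_nonneg_left hn hK.le
  exact ⟨c6.trans this, c7.trans this⟩
end

section
/- (Theorem 3.4, local solvability and stability for the inverse discrete transmission eigenvalue problem.) Let α_1,…,α_l, β_1,…,β_l, α•_1,…,α•_l, β•_1,…,β•_l be fixed complex numbers with α_n ≠ 0, α•_n ≠ 0 for all n and α_l ≠ α•_l, and let λ_1,…,λ_{2l−1} be the eigenvalues of the corresponding transmission problem. Then there exist ε > 0 and C > 0, depending only on {α_n}, {β_n}, {α•_n}, {β•_n}, such that for any complex numbers λ̃_1,…,λ̃_{2l−1}, α̃•_1,…,α̃•_l, β̃•_1,…,β̃•_l, α̃_l satisfying δ := max_{1 ≤ j ≤ 2l−1} |λ_j − λ̃_j| + max_{1 ≤ n ≤ l} (|α•_n − α̃•_n| + |β•_n − β̃•_n|) + |α_l − α̃_l| ≤ ε, there exist unique complex numbers α̃_1,…,α̃_{l−1} (all nonzero) and β̃_1,…,β̃_l such that λ̃_1,…,λ̃_{2l−1} are the eigenvalues, counted with multiplicity, of the transmission problem with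 coefficients {α̃_n}, {β̃_n}, {α̃•_n}, {β̃•_n}; moreover |α_n − α̃_n| ≤ Cδ and |β_n − β̃_n| ≤ Cδ for n = 1,…,l. -/
open Polynomial

/-- `Λ 1, …, Λ (2l-1)` are the eigenvalues, counted with multiplicity, of the discrete
transmission eigenvalue problem with coefficients `α`, `β`, `α•`, `β•`: the characteristic
polynomial `D = φ l * φ• (l+1) - φ (l+1) * φ• l` (where `φ`, `φ•` are the polynomial
solutions of the corresponding difference equations with `φ 0 = φ• 0 = 0`,
`φ 1 = φ• 1 = 1`) equals `c ∏_{j=1}^{2l-1} (X - Λ j)` for some nonzero constant `c`. -/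
def TransmissionEigenvalues (l : ℕ) (α β αs βs Λ : ℕ → ℂ) : Prop :=
  ∃ φ φs : ℕ → Polynomial ℂ,
    φ 0 = 0 ∧ φ 1 = 1 ∧ φs 0 = 0 ∧ φs 1 = 1 ∧
    (∀ n, 1 ≤ n → n ≤ l →
      C (α n) * φ (n + 1) + C (β n) * φ n + C (α n) * φ (n - 1) = X * φ n) ∧
    (∀ n, 1 ≤ n → n ≤ l →
      C (αs n) * φs (n + 1) + C (βs n) * φs n + C (αs n) * φs (n - 1) = X * φs n) ∧
    ∃ c : ℂ, c ≠ 0 ∧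
      φ l * φs (l + 1) - φ (l + 1) * φs l
        = C c * ∏ j ∈ Finset.Icc 1 (2 * l - 1), (X - C (Λ j))

open Polynomial Filter Asymptotics Topology

def Good {T : Type*} (F : Filter T) (δ : T → ℝ) (f : T → ℂ) (a : ℂ) : Prop :=
  (fun t => f t - a) =O[F] δ

def PGood {T : Type*} (F : Filter T) (δ : T → ℝ) (f : T → ℂ[X]) (a : ℂ[X]) : Prop :=
  ∀ k, Good F δ (fun t => (f t).coeff k) (a.coeff k)

section good
variable {T : Type*} {F : Filter T} {δ : T → ℝ}

theorem Good.const (a : ℂ) : Good F δ (fun _ => a) a := by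
  simp only [Good, sub_self]; exact isBigO_zero _ _

theorem Good.add {f g : T → ℂ} {a b : ℂ} (hf : Good F δ f a) (hg : Good F δ g b) :
    Good F δ (fun t => f t + g t) (a + b) := by
  refine (IsBigO.add hf hg).congr_left fun t => ?_
  ring

theorem Good.neg {f : T → ℂ} {a : ℂ} (hf : Good F δ f a) :
    Good F δ (fun t => - f t) (-a) := by
  refine (IsBigO.neg_left hf).congr_left fun t => ?_
  ring

theorem Good.sub {f g : T → ℂ} {a b : ℂ} (hf : Good F δ f a) (hg : Good F δ g b) :
    Good F δ (fun t => f t - g t) (a - b) := by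
  simpa only [sub_eq_add_neg] using hf.add hg.neg

theorem Good.tendsto (hδ : Tendsto δ F (𝓝 0)) {f : T → ℂ} {a : ℂ} (hf : Good F δ f a) :
    Tendsto f F (𝓝 a) := by
  have := IsBigO.trans_tendsto hf hδ
  simpa using this.add_const a

theorem Good.mul (hδ : Tendsto δ F (𝓝 0)) {f g : T → ℂ} {a b : ℂ}
    (hf : Good F δ f a) (hg : Good F δ g b) :
    Good F δ (fun t => f t * g t) (a * b) := by
  have h1 : (fun t => (f t - a) * g t) =O[F] δ := by
    have := IsBigO.mul hf ((hg.tendsto hδ).isBigO_one ℝ)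
    simpa using this
  have h2 : (fun t => a * (g t - b)) =O[F] δ := IsBigO.const_mul_left hg a
  refine (h1.add h2).congr_left fun t => ?_
  ring

theorem Good.eventually_ne (hδ : Tendsto δ F (𝓝 0)) {f : T → ℂ} {a : ℂ}
    (hf : Good F δ f a) (ha : a ≠ 0) : ∀ᶠ t in F, f t ≠ 0 :=
  (hf.tendsto hδ).eventually_ne ha

theorem Good.inv (hδ : Tendsto δ F (𝓝 0)) {f : T → ℂ} {a : ℂ}
    (hf : Good F δ f a) (ha : a ≠ 0) : Good F δ (fun t => (f t)⁻¹) a⁻¹ := by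
  have h0 := hf.eventually_ne hδ ha
  have h1 : Tendsto (fun t => - ((f t)⁻¹ * a⁻¹)) F (𝓝 (-(a⁻¹ * a⁻¹))) :=
    (((hf.tendsto hδ).inv₀ ha).mul_const _).neg
  have h2 := IsBigO.mul hf (h1.isBigO_one ℝ)
  simp only [mul_one] at h2
  refine h2.congr' ?_ EventuallyEq.rfl
  filter_upwards [h0] with t ht
  field_simp
  ring

theorem Good.sum {ι : Type*} (s : Finset ι) {f : ι → T → ℂ} {a : ι → ℂ}
    (h : ∀ i ∈ s, Good F δ (f i) (a i)) :
    Good F δ (fun t => ∑ i ∈ s, f i t) (∑ i ∈ s, a i) := by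
  classical
  induction s using Finset.induction_on with
  | empty => simpa using Good.const 0
  | insert i s hi ih =>
    simp only [Finset.sum_insert hi]
    exact (h i (by simp)).add (ih fun j hj => h j (by simp [hj]))

theorem Good.prod (hδ : Tendsto δ F (𝓝 0)) {ι : Type*} (s : Finset ι) {f : ι → T → ℂ} {a : ι → ℂ}
    (h : ∀ i ∈ s, Good F δ (f i) (a i)) :
    Good F δ (fun t => ∏ i ∈ s, f i t) (∏ i ∈ s, a i) := by
  classical
  induction s using Finset.induction_on with
  | empty => simpa using Good.const 1
  | insert i s hi ih =>
    simp only [Finset.prod_insert hi]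
    exact (h i (by simp)).mul hδ (ih fun j hj => h j (by simp [hj]))

theorem Good.det (hδ : Tendsto δ F (𝓝 0)) {n : Type*} [Fintype n] [DecidableEq n]
    {M : T → Matrix n n ℂ} {M0 : Matrix n n ℂ}
    (h : ∀ i j, Good F δ (fun t => M t i j) (M0 i j)) :
    Good F δ (fun t => (M t).det) M0.det := by
  simp only [Matrix.det_apply']
  exact Good.sum _ fun σ _ => (Good.const _).mul hδ (Good.prod hδ _ fun i _ => h _ _)

theorem Good.adjugate (hδ : Tendsto δ F (𝓝 0)) {n : Type*} [Fintype n] [DecidableEq n]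
    {M : T → Matrix n n ℂ} {M0 : Matrix n n ℂ}
    (h : ∀ i j, Good F δ (fun t => M t i j) (M0 i j)) (i j : n) :
    Good F δ (fun t => (M t).adjugate i j) (M0.adjugate i j) := by
  simp only [Matrix.adjugate_apply]
  refine Good.det hδ fun a b => ?_
  simp only [Matrix.updateRow_apply]
  split_ifs
  · exact Good.const _
  · exact h _ _

theorem PGood.const (a : ℂ[X]) : PGood F δ (fun _ => a) a := fun _ => Good.const _

theorem PGood.C {f : T → ℂ} {a : ℂ} (hf : Good F δ f a) :
    PGood F δ (fun t => C (f t)) (C a) := by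
  intro k
  simp only [coeff_C]
  split_ifs
  · exact hf
  · exact Good.const _

theorem PGood.add {f g : T → ℂ[X]} {a b : ℂ[X]} (hf : PGood F δ f a) (hg : PGood F δ g b) :
    PGood F δ (fun t => f t + g t) (a + b) := fun k => by
  simpa only [coeff_add] using (hf k).add (hg k)

theorem PGood.sub {f g : T → ℂ[X]} {a b : ℂ[X]} (hf : PGood F δ f a) (hg : PGood F δ g b) :
    PGood F δ (fun t => f t - g t) (a - b) := fun k => by
  simpa only [coeff_sub] using (hf k).sub (hg k)

theorem PGood.mul (hδ : Tendsto δ F (𝓝 0)) {f g : T → ℂ[X]} {a b : ℂ[X]}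
    (hf : PGood F δ f a) (hg : PGood F δ g b) :
    PGood F δ (fun t => f t * g t) (a * b) := fun k => by
  simp only [coeff_mul]
  exact Good.sum _ fun i _ => (hf _).mul hδ (hg _)

theorem PGood.prod (hδ : Tendsto δ F (𝓝 0)) {ι : Type*} (s : Finset ι)
    {f : ι → T → ℂ[X]} {a : ι → ℂ[X]}
    (h : ∀ i ∈ s, PGood F δ (f i) (a i)) :
    PGood F δ (fun t => ∏ i ∈ s, f i t) (∏ i ∈ s, a i) := by
  classical
  induction s using Finset.induction_on with
  | empty => simpa using PGood.const 1
  | insert i s hi ih =>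
    simp only [Finset.prod_insert hi]
    exact (h i (by simp)).mul hδ (ih fun j hj => h j (by simp [hj]))

theorem Good.uniform (h0 : ∀ᶠ t in F, 0 ≤ δ t) (s : Finset ℕ) {f : ℕ → T → ℂ} {a : ℕ → ℂ}
    (h : ∀ i ∈ s, Good F δ (f i) (a i)) :
    ∃ K > (0 : ℝ), ∀ᶠ t in F, ∀ i ∈ s, ‖a i - f i t‖ ≤ K * δ t := by
  classical
  induction s using Finset.induction_on with
  | empty => exact ⟨1, one_pos, by simp⟩
  | insert i s hi ih =>
    obtain ⟨K, hK, hs⟩ := ih fun j hj => h j (by simp [hj])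
    obtain ⟨K', hK', h'⟩ := (h i (by simp)).exists_pos
    refine ⟨max K K', lt_max_of_lt_left hK, ?_⟩
    filter_upwards [hs, h'.bound, h0] with t h1 h2 h3 j hj
    rcases Finset.mem_insert.1 hj with rfl | hj
    · rw [norm_sub_rev]
      refine h2.trans ?_
      rw [Real.norm_of_nonneg h3]
      gcongr
      exact le_max_right _ _
    · refine (h1 j hj).trans ?_
      gcongr
      exact le_max_left _ _

theorem sylvester_family (hδ : Tendsto δ F (𝓝 0)) {m n : ℕ} {f g R : T → ℂ[X]} {f0 g0 R0 : ℂ[X]}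
    (hf : PGood F δ f f0) (hg : PGood F δ g g0) (hR : PGood F δ R R0)
    (hfm : ∀ t, (f t).natDegree ≤ m) (hgn : ∀ t, (g t).natDegree ≤ n)
    (hRd : ∀ t, R t ∈ degreeLT ℂ (m + n))
    (hfm0 : f0.natDegree = m) (hgn0 : g0.natDegree = n) (hco : IsCoprime f0 g0)
    {p0 q0 : ℂ[X]} (hp0 : p0 ∈ degreeLT ℂ m) (hq0 : q0 ∈ degreeLT ℂ n)
    (h0 : f0 * q0 + g0 * p0 = R0) :
    ∃ p q : T → ℂ[X], PGood F δ p p0 ∧ PGood F δ q q0 ∧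
      (∀ t, p t ∈ degreeLT ℂ m) ∧ (∀ t, q t ∈ degreeLT ℂ n) ∧
      (∀ᶠ t in F, f t * q t + g t * p t = R t) ∧
      (∀ᶠ t in F, ∀ p' q' : ℂ[X], p' ∈ degreeLT ℂ m → q' ∈ degreeLT ℂ n →
        f t * q' + g t * p' = R t → p' = p t ∧ q' = q t) := by
  have hres0 : f0.resultant g0 m n ≠ 0 := by
    subst hfm0 hgn0; exact resultant_ne_zero _ _ hco
  have hM : ∀ i j, Good F δ (fun t => (f t).sylvester (g t) m n i j) (f0.sylvester g0 m n i j) := by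
    intro i j
    induction j using Fin.addCases <;> simp only [sylvester, Matrix.of_apply, Fin.addCases_left,
      Fin.addCases_right] <;> split_ifs
    · exact hg _
    · exact Good.const _
    · exact hf _
    · exact Good.const _
  have hres : Good F δ (fun t => (f t).resultant (g t) m n) (f0.resultant g0 m n) :=
    Good.det hδ hM
  have hadj := Good.adjugate hδ hM
  have hne := hres.eventually_ne hδ hres0
  have hR0d : R0 ∈ degreeLT ℂ (m + n) := by
    rw [← h0]
    exact (sylvesterMap f0 g0 hfm0.le hgn0.le (⟨p0, hp0⟩, ⟨q0, hq0⟩)).2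
  have key : ∀ (f g R : ℂ[X]) (hf : f.natDegree ≤ m) (hg : g.natDegree ≤ n)
      (hR : R ∈ degreeLT ℂ (m + n)) (hr : f.resultant g m n ≠ 0) (p q : ℂ[X])
      (hp : p ∈ degreeLT ℂ m) (hq : q ∈ degreeLT ℂ n), f * q + g * p = R →
      p = (((f.resultant g m n)⁻¹ • adjSylvester f g ⟨R, hR⟩ : degreeLT ℂ m × degreeLT ℂ n).1 : ℂ[X]) ∧
      q = (((f.resultant g m n)⁻¹ • adjSylvester f g ⟨R, hR⟩ : degreeLT ℂ m × degreeLT ℂ n).2 : ℂ[X]) := by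
    intro f g R hf hg hR hr p q hp hq h
    have h1 := LinearMap.congr_fun (adjSylvester_comp_sylveserMap f g hf hg) (⟨p, hp⟩, ⟨q, hq⟩)
    have h2 : sylvesterMap f g hf hg (⟨p, hp⟩, ⟨q, hq⟩) = ⟨R, hR⟩ := Subtype.ext h
    rw [LinearMap.comp_apply, h2] at h1
    rw [h1]
    simp [smul_smul, hr]
  have coe1 : ∀ (f g R : ℂ[X]) (hR : R ∈ degreeLT ℂ (m + n)) (k : ℕ),
      (((adjSylvester f g ⟨R, hR⟩ : degreeLT ℂ m × degreeLT ℂ n).1 : ℂ[X])).coeff k =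
      if h : k < m then ∑ j, (f.sylvester g m n).adjugate (Fin.castAdd n ⟨k, h⟩) j * R.coeff j else 0 := by
    intro f g R hR k
    split_ifs with hk
    · have e := Matrix.repr_toLin (degreeLT.basis ℂ (m + n))
        (((degreeLT.basis ℂ m).prod (degreeLT.basis ℂ n)).reindex finSumFinEquiv)
        (f.sylvester g m n).adjugate ⟨R, hR⟩
      have e' := congrFun e (Fin.castAdd n ⟨k, hk⟩)
      simp only [Matrix.mulVec, dotProduct, degreeLT.basis_repr] at e'
      rw [← e']
      rw [Module.Basis.repr_reindex_apply, finSumFinEquiv_symm_apply_castAdd]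
      simp [adjSylvester]
    · refine coeff_eq_zero_of_degree_lt ?_
      have := (adjSylvester f g ⟨R, hR⟩ : degreeLT ℂ m × degreeLT ℂ n).1.2
      exact (mem_degreeLT.1 this).trans_le (by exact_mod_cast not_lt.1 hk)
  have coe2 : ∀ (f g R : ℂ[X]) (hR : R ∈ degreeLT ℂ (m + n)) (k : ℕ),
      (((adjSylvester f g ⟨R, hR⟩ : degreeLT ℂ m × degreeLT ℂ n).2 : ℂ[X])).coeff k =
      if h : k < n then ∑ j, (f.sylvester g m n).adjugate (Fin.natAdd m ⟨k, h⟩) j * R.coeff j else 0 := by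
    intro f g R hR k
    split_ifs with hk
    · have e := Matrix.repr_toLin (degreeLT.basis ℂ (m + n))
        (((degreeLT.basis ℂ m).prod (degreeLT.basis ℂ n)).reindex finSumFinEquiv)
        (f.sylvester g m n).adjugate ⟨R, hR⟩
      have e' := congrFun e (Fin.natAdd m ⟨k, hk⟩)
      simp only [Matrix.mulVec, dotProduct, degreeLT.basis_repr] at e'
      rw [← e']
      rw [Module.Basis.repr_reindex_apply, finSumFinEquiv_symm_apply_natAdd]
      simp [adjSylvester]
    · refine coeff_eq_zero_of_degree_lt ?_
      have := (adjSylvester f g ⟨R, hR⟩ : degreeLT ℂ m × degreeLT ℂ n).2.2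
      exact (mem_degreeLT.1 this).trans_le (by exact_mod_cast not_lt.1 hk)
  refine ⟨fun t => (((f t).resultant (g t) m n)⁻¹ • adjSylvester (f t) (g t) ⟨R t, hRd t⟩ :
      degreeLT ℂ m × degreeLT ℂ n).1, fun t => (((f t).resultant (g t) m n)⁻¹ •
      adjSylvester (f t) (g t) ⟨R t, hRd t⟩ : degreeLT ℂ m × degreeLT ℂ n).2,
      ?_, ?_, fun t => SetLike.coe_mem _, fun t => SetLike.coe_mem _, ?_, ?_⟩
  · rw [(key f0 g0 R0 hfm0.le hgn0.le hR0d hres0 p0 q0 hp0 hq0 h0).1]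
    intro k
    simp only [Prod.smul_fst, Submodule.coe_smul, coeff_smul, smul_eq_mul, coe1]
    refine (hres.inv hδ hres0).mul hδ ?_
    split_ifs
    · exact Good.sum _ fun j _ => (hadj _ _).mul hδ (hR _)
    · exact Good.const _
  · rw [(key f0 g0 R0 hfm0.le hgn0.le hR0d hres0 p0 q0 hp0 hq0 h0).2]
    intro k
    simp only [Prod.smul_snd, Submodule.coe_smul, coeff_smul, smul_eq_mul, coe2]
    refine (hres.inv hδ hres0).mul hδ ?_
    split_ifs
    · exact Good.sum _ fun j _ => (hadj _ _).mul hδ (hR _)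
    · exact Good.const _
  · filter_upwards [hne] with t ht
    have h1 := LinearMap.congr_fun (sylveserMap_comp_adjSylvester (f t) (g t) (hfm t) (hgn t))
      (((f t).resultant (g t) m n)⁻¹ • ⟨R t, hRd t⟩)
    rw [LinearMap.comp_apply, map_smul] at h1
    have h2 := congrArg Subtype.val h1
    simp only [LinearMap.smul_apply, LinearMap.id_apply, smul_smul, mul_inv_cancel₀ ht, one_smul] at h2
    exact h2
  · filter_upwards [hne] with t ht p' q' hp' hq' h
    exact key _ _ _ (hfm t) (hgn t) (hRd t) ht p' q' hp' hq' h

end good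

noncomputable def psi (α β : ℕ → ℂ) : ℕ → ℂ[X]
  | 0 => 0
  | 1 => 1
  | (n + 2) => (X - C (β (n + 1))) * psi α β (n + 1) - C (α (n + 1) * α n) * psi α β n

theorem psi_succ_succ (α β : ℕ → ℂ) (n : ℕ) : psi α β (n + 2) =
    (X - C (β (n + 1))) * psi α β (n + 1) - C (α (n + 1) * α n) * psi α β n := by
  rw [psi]

theorem psi_congr {α β α' β' : ℕ → ℂ} (n : ℕ) (h : ∀ i < n, α i = α' i ∧ β i = β' i) :
    psi α β n = psi α' β' n := by
  induction n using Nat.strong_induction_on with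
  | _ n ih =>
    match n with
    | 0 => simp [psi]
    | 1 => simp [psi]
    | n + 2 =>
      rw [psi_succ_succ, psi_succ_succ, ih (n + 1) (by omega) fun i hi => h i (by omega),
        ih n (by omega) fun i hi => h i (by omega), (h (n + 1) (by omega)).1,
        (h (n + 1) (by omega)).2, (h n (by omega)).1]

theorem psi_degree_aux (α β : ℕ → ℂ) (n : ℕ) :
    (psi α β n).degree < (n : ℕ) ∧ (psi α β (n + 1)).degree = (n : ℕ) ∧ (psi α β (n + 1)).Monic := by
  induction n with
  | zero => simp [psi]
  | succ n ih =>
    obtain ⟨h1, h2, h3⟩ := ih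
    have hm : ((X - C (β (n + 1))) * psi α β (n + 1)).Monic := (monic_X_sub_C _).mul h3
    have hd : ((X - C (β (n + 1))) * psi α β (n + 1)).degree = ((n + 1 : ℕ) : WithBot ℕ) := by
      rw [degree_mul, degree_X_sub_C, h2]; push_cast; ring
    have hlt : (C (α (n + 1) * α n) * psi α β n).degree <
        ((X - C (β (n + 1))) * psi α β (n + 1)).degree := by
      rw [hd, ← smul_eq_C_mul]
      refine (degree_smul_le _ _).trans_lt (h1.trans ?_)
      exact_mod_cast Nat.lt_succ_self n
    refine ⟨?_, ?_, ?_⟩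
    · rw [h2]; exact_mod_cast Nat.lt_succ_self n
    · rw [psi_succ_succ, degree_sub_eq_left_of_degree_lt hlt, hd]
    · rw [psi_succ_succ]; exact hm.sub_of_left hlt

theorem psi_monic (α β : ℕ → ℂ) (n : ℕ) : (psi α β (n + 1)).Monic := (psi_degree_aux α β n).2.2

theorem psi_natDegree (α β : ℕ → ℂ) (n : ℕ) : (psi α β (n + 1)).natDegree = n :=
  natDegree_eq_of_degree_eq_some (psi_degree_aux α β n).2.1

theorem psi_coeff_top (α β : ℕ → ℂ) (n : ℕ) : (psi α β (n + 1)).coeff n = 1 := by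
  have := (psi_monic α β n).coeff_natDegree
  rwa [psi_natDegree] at this

theorem psi_coeff_zero (α β : ℕ → ℂ) (n k : ℕ) (h : n ≤ k) : (psi α β n).coeff k = 0 :=
  coeff_eq_zero_of_degree_lt ((psi_degree_aux α β n).1.trans_le (by exact_mod_cast h))

theorem psi_coprime (α β : ℕ → ℂ) (n : ℕ) (h : ∀ i, 1 ≤ i → i ≤ n → α i ≠ 0) :
    IsCoprime (psi α β (n + 1)) (psi α β n) := by
  induction n with
  | zero => simpa [psi] using isCoprime_one_left
  | succ n ih =>
    have ih := ih fun i h1 h2 => h i h1 (by omega)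
    rcases Nat.eq_zero_or_pos n with rfl | hn
    · simpa [psi] using isCoprime_one_right
    rw [psi_succ_succ]
    have hγ : α (n + 1) * α n ≠ 0 := mul_ne_zero (h _ (by omega) le_rfl) (h _ hn (by omega))
    have h2 : IsCoprime (-(C (α (n + 1) * α n) * psi α β n)) (psi α β (n + 1)) := by
      rw [IsCoprime.neg_left_iff]
      exact (isCoprime_mul_unit_left_left (isUnit_C.2 hγ.isUnit) _ _).2 ih.symm
    have h3 := IsCoprime.add_mul_right_left h2 (X - C (β (n + 1)))
    rwa [neg_add_eq_sub] at h3

theorem psi_unique (α β α' β' : ℕ → ℂ) (k : ℕ)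
    (h : ∀ i, 1 ≤ i → i ≤ k + 1 → α i ≠ 0)
    (ha : α (k + 1) = α' (k + 1))
    (h1 : psi α β (k + 1) = psi α' β' (k + 1)) (h2 : psi α β (k + 2) = psi α' β' (k + 2)) :
    ∀ i, 1 ≤ i → i ≤ k + 1 → α i = α' i ∧ β i = β' i := by
  induction k with
  | zero =>
    intro i hi hi'
    obtain rfl : i = 1 := by omega
    refine ⟨ha, ?_⟩
    have := congrArg (fun p => coeff p 0) h2
    simpa [psi] using this
  | succ k ih =>
    have e := h2
    rw [psi_succ_succ, psi_succ_succ α' β', ← h1] at e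
    have hβ : β (k + 2) = β' (k + 2) := by
      have := congrArg (fun p => coeff p (k + 1)) e
      simp only [sub_mul, coeff_sub, coeff_C_mul, psi_coeff_zero _ _ (k + 1) (k + 1) le_rfl,
        psi_coeff_top α β (k + 1), mul_one, mul_zero, sub_zero] at this
      simpa using this
    rw [hβ] at e
    have e' := sub_right_injective e
    have hγ : α (k + 2) * α (k + 1) = α' (k + 2) * α' (k + 1) := by
      have := congrArg (fun p => coeff p k) e'
      simpa only [coeff_C_mul, psi_coeff_top, mul_one] using this
    have hne : α (k + 2) * α (k + 1) ≠ 0 :=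
      mul_ne_zero (h _ (by omega) (by omega)) (h _ (by omega) (by omega))
    have e'' : psi α β (k + 1) = psi α' β' (k + 1) := by
      rw [← hγ] at e'
      exact mul_left_cancel₀ (C_ne_zero.2 hne) e'
    have hα1 : α (k + 1) = α' (k + 1) := by
      rw [← ha] at hγ
      exact mul_left_cancel₀ (h _ (by omega) (by omega)) hγ
    have := ih (fun i hi hi' => h i hi (by omega)) hα1 e'' h1
    intro i hi hi'
    rcases Nat.lt_or_ge i (k + 2) with hlt | hge
    · exact this i hi (by omega)
    · obtain rfl : i = k + 2 := by omega
      exact ⟨ha, hβ⟩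

theorem phi_psi (l : ℕ) (α β : ℕ → ℂ) (φ : ℕ → ℂ[X]) (h0 : φ 0 = 0) (h1 : φ 1 = 1)
    (hr : ∀ n, 1 ≤ n → n ≤ l →
      C (α n) * φ (n + 1) + C (β n) * φ n + C (α n) * φ (n - 1) = X * φ n) (n : ℕ) (hn : n ≤ l) :
    C (∏ i ∈ Finset.range n, α (i + 1)) * φ (n + 1) = psi α β (n + 1) := by
  induction n using Nat.strong_induction_on with
  | _ n ih =>
    match n with
    | 0 => simp [psi, h1]
    | n + 1 =>
      have e := hr (n + 1) (by omega) hn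
      have i1 := ih n (by omega) (by omega)
      have i2 : C (α (n + 1) * α n) * psi α β n =
          C (α (n + 1) * ∏ i ∈ Finset.range n, α (i + 1)) * φ n := by
        match n with
        | 0 => simp [psi, h0]
        | n + 1 =>
          rw [← ih n (by omega) (by omega), Finset.prod_range_succ]
          simp only [C_mul]; ring
      rw [psi_succ_succ, ← i1, i2, Finset.prod_range_succ]
      simp only [Nat.add_sub_cancel] at e
      simp only [C_mul]
      linear_combination (C (∏ i ∈ Finset.range n, α (i + 1))) * e

theorem trans_forward (m : ℕ) (α β αs βs Λ : ℕ → ℂ)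
    (hT : TransmissionEigenvalues (m + 1) α β αs βs Λ) :
    C (α (m + 1)) * psi α β (m + 1) * psi αs βs (m + 2) -
      C (αs (m + 1)) * psi α β (m + 2) * psi αs βs (m + 1) =
    C (α (m + 1) - αs (m + 1)) * ∏ j ∈ Finset.Icc 1 (2 * (m + 1) - 1), (X - C (Λ j)) := by
  obtain ⟨φ, φs, h0, h1, h0s, h1s, hr, hrs, c, hc, hD⟩ := hT
  have a1 := phi_psi _ α β φ h0 h1 hr m (by omega)
  have a2 := phi_psi _ α β φ h0 h1 hr (m + 1) (by omega)
  have b1 := phi_psi _ αs βs φs h0s h1s hrs m (by omega)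
  have b2 := phi_psi _ αs βs φs h0s h1s hrs (m + 1) (by omega)
  rw [Finset.prod_range_succ] at a2 b2
  set w := ∏ i ∈ Finset.range m, α (i + 1)
  set ws := ∏ i ∈ Finset.range m, αs (i + 1)
  set P := ∏ j ∈ Finset.Icc 1 (2 * (m + 1) - 1), (X - C (Λ j)) with hP
  have key : C (α (m + 1)) * psi α β (m + 1) * psi αs βs (m + 2) -
      C (αs (m + 1)) * psi α β (m + 2) * psi αs βs (m + 1) =
      C (w * ws * α (m + 1) * αs (m + 1) * c) * P := by
    rw [← a1, ← a2, ← b1, ← b2]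
    simp only [C_mul]
    linear_combination (C w * C ws * C (α (m + 1)) * C (αs (m + 1))) * hD
  rw [key]
  congr 2
  have hPm : P.Monic := monic_prod_of_monic _ _ fun j _ => monic_X_sub_C _
  have hPd : P.natDegree = m + (m + 1) := by
    rw [hP, natDegree_prod_of_monic _ _ fun j _ => monic_X_sub_C _]
    simp; omega
  have t1 : (psi α β (m + 1) * psi αs βs (m + 2)).coeff (m + (m + 1)) = 1 := by
    rw [coeff_mul_add_eq_of_natDegree_le (psi_natDegree _ _ _).le (psi_natDegree _ _ _).le,
      psi_coeff_top, psi_coeff_top, one_mul]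
  have t2 : (psi α β (m + 2) * psi αs βs (m + 1)).coeff (m + (m + 1)) = 1 := by
    rw [add_comm m (m + 1), coeff_mul_add_eq_of_natDegree_le (psi_natDegree _ _ _).le (psi_natDegree _ _ _).le,
      psi_coeff_top, psi_coeff_top, one_mul]
  have t3 : P.coeff (m + (m + 1)) = 1 := by rw [← hPd]; exact hPm.coeff_natDegree
  have := congrArg (fun p => coeff p (m + (m + 1))) key
  simp only [mul_assoc, coeff_sub, coeff_C_mul, t1, t2, t3, mul_one] at this
  rw [this]; ring

theorem exists_phi (l : ℕ) (α β : ℕ → ℂ) (hα : ∀ n, 1 ≤ n → n ≤ l → α n ≠ 0) :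
    ∃ φ : ℕ → ℂ[X], φ 0 = 0 ∧ φ 1 = 1 ∧ 
    (∀ n, 1 ≤ n → n ≤ l →
      C (α n) * φ (n + 1) + C (β n) * φ n + C (α n) * φ (n - 1) = X * φ n) := by
  refine ⟨fun n => C (∏ i ∈ Finset.range (n - 1), α (i + 1))⁻¹ * psi α β n, by simp [psi],
    by simp [psi], ?_⟩
  intro n h1 hn
  obtain ⟨n, rfl⟩ : ∃ k, n = k + 1 := ⟨n - 1, by omega⟩
  have i2 : C (α (n + 1)) * (C (∏ i ∈ Finset.range (n - 1), α (i + 1))⁻¹ * psi α β n) =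
      C (∏ i ∈ Finset.range n, α (i + 1))⁻¹ * (C (α (n + 1) * α n) * psi α β n) := by
    match n with
    | 0 => simp [psi]
    | n + 1 =>
      have := hα (n + 1) (by omega) (by omega)
      rw [Finset.prod_range_succ, Nat.add_sub_cancel, ← mul_assoc, ← mul_assoc, ← C_mul, ← C_mul]
      congr 2
      rw [mul_inv]
      field_simp
  have i3 : C (α (n + 1)) * C (∏ i ∈ Finset.range (n + 1), α (i + 1))⁻¹ =
     C (∏ i ∈ Finset.range n, α (i + 1))⁻¹ := by
    have := hα (n + 1) (by omega) (by omega)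
    rw [Finset.prod_range_succ, ← C_mul]
    congr 1
    rw [mul_inv]
    field_simp
  simp only [Nat.add_sub_cancel]
  rw [i2, ← mul_assoc, i3, psi_succ_succ]
  ring

theorem trans_backward (m : ℕ) (α β αs βs Λ : ℕ → ℂ)
    (hα : ∀ n, 1 ≤ n → n ≤ m + 1 → α n ≠ 0) (hαs : ∀ n, 1 ≤ n → n ≤ m + 1 → αs n ≠ 0)
    (hne : α (m + 1) ≠ αs (m + 1))
    (h : C (α (m + 1)) * psi α β (m + 1) * psi αs βs (m + 2) -
      C (αs (m + 1)) * psi α β (m + 2) * psi αs βs (m + 1) =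
    C (α (m + 1) - αs (m + 1)) * ∏ j ∈ Finset.Icc 1 (2 * (m + 1) - 1), (X - C (Λ j))) :
    TransmissionEigenvalues (m + 1) α β αs βs Λ := by
  obtain ⟨φ, h0, h1, hr⟩ := exists_phi (m + 1) α β hα
  obtain ⟨φs, h0s, h1s, hrs⟩ := exists_phi (m + 1) αs βs hαs
  have a1 := phi_psi _ α β φ h0 h1 hr m (by omega)
  have a2 := phi_psi _ α β φ h0 h1 hr (m + 1) (by omega)
  have b1 := phi_psi _ αs βs φs h0s h1s hrs m (by omega)
  have b2 := phi_psi _ αs βs φs h0s h1s hrs (m + 1) (by omega)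
  have hw : ∏ i ∈ Finset.range (m + 1), α (i + 1) ≠ 0 := Finset.prod_ne_zero_iff.2 fun i hi =>
    hα _ (by omega) (by have := Finset.mem_range.1 hi; omega)
  have hws : ∏ i ∈ Finset.range (m + 1), αs (i + 1) ≠ 0 := Finset.prod_ne_zero_iff.2 fun i hi =>
    hαs _ (by omega) (by have := Finset.mem_range.1 hi; omega)
  rw [Finset.prod_range_succ] at a2 b2 hw hws
  set w := ∏ i ∈ Finset.range m, α (i + 1)
  set ws := ∏ i ∈ Finset.range m, αs (i + 1)
  refine ⟨φ, φs, h0, h1, h0s, h1s, hr, hrs,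
    ((w * α (m + 1)) * (ws * αs (m + 1)))⁻¹ * (α (m + 1) - αs (m + 1)),
    mul_ne_zero (inv_ne_zero (mul_ne_zero hw hws)) (sub_ne_zero.2 hne), ?_⟩
  rw [C_mul, mul_assoc, ← h, ← a1, ← a2, ← b1, ← b2]
  have : C ((w * α (m + 1)) * (ws * αs (m + 1)))⁻¹ * C ((w * α (m + 1)) * (ws * αs (m + 1))) = 1 := by
    rw [← C_mul, inv_mul_cancel₀ (mul_ne_zero hw hws), C_1]
  simp only [C_mul] at this ⊢
  linear_combination (-(φ (m + 1) * φs (m + 1 + 1) - φ (m + 1 + 1) * φs (m + 1))) * this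

section main
variable {T : Type*} {F : Filter T} {δ : T → ℝ}

theorem psi_good (hδ : Tendsto δ F (𝓝 0)) {α β : T → ℕ → ℂ} {α0 β0 : ℕ → ℂ} (n : ℕ)
    (h : ∀ i, 1 ≤ i → i < n → Good F δ (fun t => α t i) (α0 i) ∧ Good F δ (fun t => β t i) (β0 i)) :
    PGood F δ (fun t => psi (α t) (β t) n) (psi α0 β0 n) := by
  induction n using Nat.strong_induction_on with
  | _ n ih =>
    match n with
    | 0 => simpa [psi] using PGood.const 0
    | 1 => simpa [psi] using PGood.const 1
    | n + 2 =>
      have i1 := ih (n + 1) (by omega) fun i hi hi' => h i hi (by omega)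
      have i2 := ih n (by omega) fun i hi hi' => h i hi (by omega)
      simp only [psi_succ_succ]
      have ⟨ha, hb⟩ := h (n + 1) (by omega) (by omega)
      refine PGood.sub (((PGood.const X).sub (PGood.C hb)).mul hδ i1) ?_
      match n with
      | 0 => simpa [psi] using PGood.const 0
      | n + 1 => exact (PGood.C (ha.mul hδ (h (n + 1) (by omega) (by omega)).1)).mul hδ i2

theorem monic_add_low {B r : ℂ[X]} {n : ℕ} (hB : B.Monic) (hd : B.natDegree = n)
    (hr : r ∈ degreeLT ℂ n) : (B + r).Monic ∧ (B + r).natDegree = n := by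
  have hlt : r.degree < B.degree := by
    rw [degree_eq_natDegree hB.ne_zero, hd]; exact mem_degreeLT.1 hr
  refine ⟨hB.add_of_left hlt, ?_⟩
  rw [natDegree_add_eq_left_of_degree_lt hlt, hd]

theorem monic_sub_low {A B : ℂ[X]} {n : ℕ} (hA : A.Monic) (hB : B.Monic) (hd : A.natDegree = n)
    (hd' : B.natDegree = n) : A - B ∈ degreeLT ℂ n := by
  rw [mem_degreeLT]
  have h1 : A.degree = n := by rw [degree_eq_natDegree hA.ne_zero, hd]
  have h2 : B.degree = n := by rw [degree_eq_natDegree hB.ne_zero, hd']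
  rw [← h1]
  exact degree_sub_lt_left (h1.trans h2.symm) hA.ne_zero (by rw [hA.leadingCoeff, hB.leadingCoeff])

theorem descent (hδ : Tendsto δ F (𝓝 0)) {α0 β0 : ℕ → ℂ} (k : ℕ) :
    (∀ i, 1 ≤ i → i ≤ k + 1 → α0 i ≠ 0) →
    ∀ (P Q : T → ℂ[X]) (a : T → ℂ), PGood F δ P (psi α0 β0 (k + 1)) →
      PGood F δ Q (psi α0 β0 (k + 2)) → Good F δ a (α0 (k + 1)) →
      (∀ᶠ t in F, (P t).Monic ∧ (P t).natDegree = k) →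
      (∀ᶠ t in F, (Q t).Monic ∧ (Q t).natDegree = k + 1) →
      ∃ α β : T → ℕ → ℂ, (∀ t, α t (k + 1) = a t) ∧
        (∀ i, 1 ≤ i → i ≤ k + 1 → Good F δ (fun t => α t i) (α0 i) ∧
          Good F δ (fun t => β t i) (β0 i)) ∧
        ∀ᶠ t in F, psi (α t) (β t) (k + 1) = P t ∧ psi (α t) (β t) (k + 2) = Q t := by
  induction k with
  | zero =>
    intro h0 P Q a hP hQ ha hPm hQm
    refine ⟨fun t _ => a t, fun t _ => - (Q t).coeff 0, fun _ => rfl, ?_, ?_⟩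
    · intro i h1 h2
      obtain rfl : i = 1 := by omega
      refine ⟨ha, ?_⟩
      have := (hQ 0).neg
      simpa [psi] using this
    · filter_upwards [hPm, hQm] with t h1 h2
      refine ⟨?_, ?_⟩
      · rw [eq_one_of_monic_natDegree_zero h1.1 h1.2]; simp [psi]
      · conv_rhs => rw [h2.1.as_sum, h2.2]
        simp [psi]
  | succ k ih =>
    intro h0 P Q a hP hQ ha hPm hQm
    have hne1 : α0 (k + 2) ≠ 0 := h0 _ (by omega) (by omega)
    have hne2 : α0 (k + 1) ≠ 0 := h0 _ (by omega) (by omega)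
    have hγ0 : α0 (k + 2) * α0 (k + 1) ≠ 0 := mul_ne_zero hne1 hne2
    set b : T → ℂ := fun t => (X * P t - Q t).coeff (k + 1) with hb
    set S : T → ℂ[X] := fun t => X * P t - Q t - C (b t) * P t with hS
    set γ : T → ℂ := fun t => (S t).coeff k with hγ
    have e0 := psi_succ_succ α0 β0 (k + 1)
    have bG : Good F δ b (β0 (k + 2)) := by
      have := (((PGood.const X).mul hδ hP).sub hQ) (k + 1)
      convert! this using 1
      rw [show X * psi α0 β0 (k + 1 + 1) - psi α0 β0 (k + 1 + 2) =
        C (β0 (k + 2)) * psi α0 β0 (k + 2) + C (α0 (k + 2) * α0 (k + 1)) * psi α0 β0 (k + 1) by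
          rw [e0]; ring]
      rw [coeff_add, coeff_C_mul, coeff_C_mul, psi_coeff_top, psi_coeff_zero _ _ _ _ le_rfl]
      ring
    have SG : PGood F δ S (C (α0 (k + 2) * α0 (k + 1)) * psi α0 β0 (k + 1)) := by
      have := ((((PGood.const X).mul hδ hP).sub hQ)).sub ((PGood.C bG).mul hδ hP)
      convert! this using 1
      rw [e0]; ring
    have γG : Good F δ γ (α0 (k + 2) * α0 (k + 1)) := by
      have := SG k
      rwa [coeff_C_mul, psi_coeff_top, mul_one] at this
    have γne := γG.eventually_ne hδ hγ0
    have ane := ha.eventually_ne hδ hne1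
    obtain ⟨α, β, hα, hG, hpsi⟩ := ih (fun i h1 h2 => h0 i h1 (by omega))
      (fun t => C (γ t)⁻¹ * S t) P (fun t => (a t)⁻¹ * γ t)
      (by
        have := (PGood.C (γG.inv hδ hγ0)).mul hδ SG
        convert! this using 1
        rw [← mul_assoc, ← C_mul, inv_mul_cancel₀ hγ0, C_1, one_mul])
      hP
      (by
        have := (ha.inv hδ hne1).mul hδ γG
        rwa [inv_mul_cancel_left₀ hne1] at this)
      (by
        filter_upwards [γne, hPm, hQm] with t h1 h2 h3
        have hd : (S t).natDegree ≤ k := by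
          have hP1 : (P t).coeff (k + 1) = 1 := by
            have := h2.1.coeff_natDegree; rwa [h2.2] at this
          have hQ1 : (Q t).coeff (k + 2) = 1 := by
            have := h3.1.coeff_natDegree; rwa [h3.2] at this
          rw [natDegree_le_iff_coeff_eq_zero]
          intro N hN
          obtain ⟨N, rfl⟩ : ∃ M, N = M + 1 := ⟨N - 1, by omega⟩
          simp only [hS, coeff_sub, coeff_X_mul, coeff_C_mul]
          rcases Nat.lt_trichotomy N k with h | h | h
          · omega
          · subst h
            simp only [hb, coeff_sub, coeff_X_mul, hP1]; ring
          · rw [coeff_eq_zero_of_natDegree_lt (p := P t) (n := N + 1) (by omega)]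
            rcases Nat.lt_or_ge (k + 1) N with h' | h'
            · rw [coeff_eq_zero_of_natDegree_lt (by omega),
                coeff_eq_zero_of_natDegree_lt (by omega)]; ring
            · obtain rfl : N = k + 1 := by omega
              rw [hP1, hQ1]; ring
        have hnd : (S t).natDegree = k := natDegree_eq_of_le_of_coeff_ne_zero hd h1
        refine ⟨?_, ?_⟩
        · rw [Monic, leadingCoeff_mul, leadingCoeff_C, leadingCoeff, hnd]
          exact inv_mul_cancel₀ h1
        · rw [natDegree_C_mul (inv_ne_zero h1), hnd])
      hPm
    refine ⟨fun t => Function.update (α t) (k + 2) (a t),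
      fun t => Function.update (β t) (k + 2) (b t), fun t => by simp, ?_, ?_⟩
    · intro i h1 h2
      rcases Nat.lt_or_ge i (k + 2) with h | h
      · simpa only [Function.update_of_ne (Nat.ne_of_lt h)] using hG i h1 (by omega)
      · obtain rfl : i = k + 2 := by omega
        simpa only [Function.update_self] using ⟨ha, bG⟩
    · filter_upwards [hpsi, γne, ane] with t h1 h2 h3
      have c1 : ∀ n ≤ k + 2, psi (Function.update (α t) (k + 2) (a t))
          (Function.update (β t) (k + 2) (b t)) n = psi (α t) (β t) n := by
        intro n hn
        refine psi_congr n fun i hi => ?_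
        have : i ≠ k + 2 := by omega
        simp [this]
      refine ⟨(c1 _ le_rfl).trans h1.2, ?_⟩
      rw [psi_succ_succ, c1 (k + 1 + 1) le_rfl, c1 (k + 1) (by omega), h1.1, h1.2]
      have hk : k + 1 ≠ k + 2 := by omega
      rw [Function.update_self, Function.update_self, Function.update_of_ne hk, hα t,
        mul_inv_cancel_left₀ h3, ← mul_assoc, ← C_mul, mul_inv_cancel₀ h2]
      simp only [hS, C_1]
      ring

end main

theorem family_main {T : Type*} {F : Filter T} {δ : T → ℝ} (hδ : Tendsto δ F (𝓝 0)) (m : ℕ)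
    (α β αs βs : ℕ → ℂ)
    (hα : ∀ n, 1 ≤ n → n ≤ m + 1 → α n ≠ 0)
    (hαs : ∀ n, 1 ≤ n → n ≤ m + 1 → αs n ≠ 0)
    (hne : α (m + 1) ≠ αs (m + 1))
    (Λ : ℕ → ℂ) (hΛ : TransmissionEigenvalues (m + 1) α β αs βs Λ)
    (Λ' αs' βs' : T → ℕ → ℂ) (a : T → ℂ)
    (gΛ : ∀ j, 1 ≤ j → j ≤ 2 * (m + 1) - 1 → Good F δ (fun t => Λ' t j) (Λ j))
    (gαs : ∀ j, 1 ≤ j → j ≤ m + 1 → Good F δ (fun t => αs' t j) (αs j))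
    (gβs : ∀ j, 1 ≤ j → j ≤ m + 1 → Good F δ (fun t => βs' t j) (βs j))
    (ga : Good F δ a (α (m + 1))) :
    ∃ α' β' : T → ℕ → ℂ, (∀ t, α' t (m + 1) = a t) ∧
      (∀ i, 1 ≤ i → i ≤ m + 1 → Good F δ (fun t => α' t i) (α i) ∧
          Good F δ (fun t => β' t i) (β i)) ∧
      ∀ᶠ t in F, (∀ n ∈ Finset.Icc 1 (m + 1), α' t n ≠ 0) ∧
        TransmissionEigenvalues (m + 1) (α' t) (β' t) (αs' t) (βs' t) (Λ' t) ∧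
        (∀ α'' β'' : ℕ → ℂ,
            α'' (m + 1) = a t →
            TransmissionEigenvalues (m + 1) α'' β'' (αs' t) (βs' t) (Λ' t) →
            (∀ n, 1 ≤ n → n ≤ m + 1 → α' t n = α'' n ∧ β' t n = β'' n)) := by
  set A : T → ℂ[X] := fun t => psi (αs' t) (βs' t) (m + 2) with hA
  set B : T → ℂ[X] := fun t => psi (αs' t) (βs' t) (m + 1) with hB
  set Pi : (ℕ → ℂ) → ℂ[X] := fun Λ => ∏ j ∈ Finset.Icc 1 (2 * (m + 1) - 1), (X - C (Λ j)) with hPi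
  have PiM : ∀ Λ, (Pi Λ).Monic := fun Λ => monic_prod_of_monic _ _ fun j _ => monic_X_sub_C _
  have PiD : ∀ Λ, (Pi Λ).natDegree = m + 1 + m := by
    intro Λ
    simp only [hPi]
    rw [natDegree_prod_of_monic _ _ fun j _ => monic_X_sub_C _]
    simp; omega
  have gA : PGood F δ A (psi αs βs (m + 2)) := psi_good hδ _ fun i h1 h2 =>
    ⟨gαs i h1 (by omega), gβs i h1 (by omega)⟩
  have gB : PGood F δ B (psi αs βs (m + 1)) := psi_good hδ _ fun i h1 h2 =>
    ⟨gαs i h1 (by omega), gβs i h1 (by omega)⟩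
  have gP : PGood F δ (fun t => Pi (Λ' t)) (Pi Λ) := PGood.prod hδ _ fun j hj => by
    have := Finset.mem_Icc.1 hj
    exact (PGood.const X).sub (PGood.C (gΛ j this.1 this.2))
  have gs := gαs (m + 1) (by omega) le_rfl
  have a0 := hα (m + 1) (by omega) le_rfl
  have s0 := hαs (m + 1) (by omega) le_rfl
  have lowR : ∀ (x y : ℕ → ℂ) (L : ℕ → ℂ),
      Pi L - psi x y (m + 2) * psi x y (m + 1) ∈ degreeLT ℂ (m + 1 + m) := by
    intro x y L
    refine monic_sub_low (PiM L) ((psi_monic _ _ _).mul (psi_monic _ _ _)) (PiD L) ?_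
    rw [(psi_monic _ _ _).natDegree_mul (psi_monic _ _ _), psi_natDegree, psi_natDegree]
  have lowC : ∀ (c : ℂ) (n : ℕ) (p : ℂ[X]), p ∈ degreeLT ℂ n → C c * p ∈ degreeLT ℂ n := by
    intro c n p hp
    rw [← smul_eq_C_mul]; exact Submodule.smul_mem _ _ hp
  -- equation transformation
  have eqn : ∀ (x y xs ys L : ℕ → ℂ), C (x (m + 1)) * psi x y (m + 1) * psi xs ys (m + 2) -
      C (xs (m + 1)) * psi x y (m + 2) * psi xs ys (m + 1) = C (x (m + 1) - xs (m + 1)) * Pi L →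
      psi xs ys (m + 2) * (C (x (m + 1)) * (psi x y (m + 1) - psi xs ys (m + 1))) +
        psi xs ys (m + 1) * (C (- xs (m + 1)) * (psi x y (m + 2) - psi xs ys (m + 2))) =
        C (x (m + 1) - xs (m + 1)) * (Pi L - psi xs ys (m + 2) * psi xs ys (m + 1)) := by
    intro x y xs ys L h
    simp only [C_sub, C_neg] at h ⊢
    linear_combination h
  have low1 : ∀ (x y xs ys : ℕ → ℂ) (c : ℂ),
      C c * (psi x y (m + 1) - psi xs ys (m + 1)) ∈ degreeLT ℂ m := fun x y xs ys c =>
    lowC _ _ _ (monic_sub_low (psi_monic _ _ _) (psi_monic _ _ _) (psi_natDegree _ _ _)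
      (psi_natDegree _ _ _))
  have low2 : ∀ (x y xs ys : ℕ → ℂ) (c : ℂ),
      C c * (psi x y (m + 2) - psi xs ys (m + 2)) ∈ degreeLT ℂ (m + 1) := fun x y xs ys c =>
    lowC _ _ _ (monic_sub_low (psi_monic _ _ _) (psi_monic _ _ _) (psi_natDegree _ _ _)
      (psi_natDegree _ _ _))
  have e0 := trans_forward m α β αs βs Λ hΛ
  obtain ⟨p, q, gp, gq, dp, dq, hpq, huniq⟩ := sylvester_family hδ (m := m + 1) (n := m)
    (R := fun t => C (a t - αs' t (m + 1)) * (Pi (Λ' t) - A t * B t)) gA gB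
    ((PGood.C (ga.sub gs)).mul hδ (gP.sub (gA.mul hδ gB)))
    (fun t => (psi_natDegree _ _ _).le) (fun t => (psi_natDegree _ _ _).le)
    (fun t => lowC _ _ _ (lowR _ _ _)) (psi_natDegree _ _ _) (psi_natDegree _ _ _)
    (psi_coprime _ _ _ hαs) (low2 α β αs βs _) (low1 α β αs βs _) (eqn α β αs βs Λ e0)
  obtain ⟨α', β', hα', hG, hpsi⟩ := descent hδ (α0 := α) (β0 := β) m hα
    (fun t => B t + C (a t)⁻¹ * q t) (fun t => A t + C (- αs' t (m + 1))⁻¹ * p t) a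
    (by
      have := gB.add ((PGood.C (ga.inv hδ a0)).mul hδ gq)
      convert! this using 1
      rw [← mul_assoc, ← C_mul, inv_mul_cancel₀ a0, C_1]; ring)
    (by
      have := gA.add ((PGood.C (gs.neg.inv hδ (neg_ne_zero.2 s0))).mul hδ gp)
      convert! this using 1
      rw [← mul_assoc, ← C_mul, inv_mul_cancel₀ (neg_ne_zero.2 s0), C_1]; ring)
    ga
    (.of_forall fun t => monic_add_low (psi_monic _ _ _) (psi_natDegree _ _ _) (lowC _ _ _ (dq t)))
    (.of_forall fun t => monic_add_low (psi_monic _ _ _) (psi_natDegree _ _ _) (lowC _ _ _ (dp t)))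
  refine ⟨α', β', hα', hG, ?_⟩
  have n1 : ∀ᶠ t in F, ∀ n ∈ Finset.Icc 1 (m + 1), α' t n ≠ 0 :=
    (Filter.eventually_all_finset _).2 fun n hn => by
      have := Finset.mem_Icc.1 hn
      exact (hG n this.1 this.2).1.eventually_ne hδ (hα n this.1 this.2)
  have n2 : ∀ᶠ t in F, ∀ n ∈ Finset.Icc 1 (m + 1), αs' t n ≠ 0 :=
    (Filter.eventually_all_finset _).2 fun n hn => by
      have := Finset.mem_Icc.1 hn
      exact (gαs n this.1 this.2).eventually_ne hδ (hαs n this.1 this.2)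
  have n3 := (ga.sub gs).eventually_ne hδ (sub_ne_zero.2 hne)
  filter_upwards [n1, n2, n3, hpq, huniq, hpsi] with t k1 k2 k3 k4 k5 k6
  have am : a t ≠ 0 := by rw [← hα' t]; exact k1 _ (by simp)
  have sm : - αs' t (m + 1) ≠ 0 := neg_ne_zero.2 (k2 _ (by simp))
  refine ⟨k1, ?_, ?_⟩
  · refine trans_backward m _ _ _ _ _ (fun n h1 h2 => k1 n (Finset.mem_Icc.2 ⟨h1, h2⟩))
      (fun n h1 h2 => k2 n (Finset.mem_Icc.2 ⟨h1, h2⟩)) ?_ ?_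
    · rw [hα' t]; exact sub_ne_zero.1 k3
    · rw [k6.1, k6.2, hα' t]
      have c1 : C (a t) * C (a t)⁻¹ = 1 := by rw [← C_mul, mul_inv_cancel₀ am, C_1]
      have c2 : C (αs' t (m + 1)) * C (- αs' t (m + 1))⁻¹ = -1 := by
        rw [← C_mul, inv_neg, mul_neg, mul_inv_cancel₀ (neg_ne_zero.1 sm), C_neg, C_1]
      change _ = C (a t - αs' t (m + 1)) * Pi (Λ' t)
      change C (a t) * (B t + C (a t)⁻¹ * q t) * A t - C (αs' t (m + 1)) *
        (A t + C (- αs' t (m + 1))⁻¹ * p t) * B t = _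
      rw [C_sub] at k4 ⊢
      linear_combination k4 + (q t * A t) * c1 - (p t * B t) * c2
  · intro α'' β'' h1 h2
    have e := eqn _ _ _ _ _ (trans_forward m _ _ _ _ _ h2)
    have := k5 _ _ (low2 _ _ _ _ _) (low1 _ _ _ _ _) (by rw [← h1]; exact e)
    refine psi_unique _ _ _ _ m (fun i u v => k1 i (Finset.mem_Icc.2 ⟨u, v⟩)) ?_ ?_ ?_
    · rw [hα' t, h1]
    · rw [k6.1, ← this.2, h1, ← mul_assoc, ← C_mul, inv_mul_cancel₀ am, C_1]; ring
    · rw [k6.2, ← this.1, ← mul_assoc, ← C_mul, inv_mul_cancel₀ sm, C_1]; ring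

/-- Theorem 3.4: local solvability and stability for the inverse discrete transmission
eigenvalue problem. Small perturbations of the eigenvalues and of the data
`α• n`, `β• n`, `α l` still produce a (unique) solvable inverse transmission problem, and
the recovered coefficients differ from the original ones by at most `C δ`. -/
theorem transmission_local_solvability_stability (l : ℕ) (hl : 1 ≤ l)
    (α β αs βs : ℕ → ℂ)
    (hα : ∀ n, 1 ≤ n → n ≤ l → α n ≠ 0)
    (hαs : ∀ n, 1 ≤ n → n ≤ l → αs n ≠ 0)
    (hne : α l ≠ αs l)
    (Λ : ℕ → ℂ) (hΛ : TransmissionEigenvalues l α β αs βs Λ) :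
    ∃ ε > (0 : ℝ), ∃ Cst > (0 : ℝ),
      ∀ (Λ' αs' βs' : ℕ → ℂ) (αl' : ℂ) (δ : ℝ),
        δ ≤ ε →
        (∀ j, 1 ≤ j → j ≤ 2 * l - 1 → ‖Λ j - Λ' j‖ ≤ δ) →
        (∀ n, 1 ≤ n → n ≤ l →
          ‖αs n - αs' n‖ + ‖βs n - βs' n‖ ≤ δ) →
        ‖α l - αl'‖ ≤ δ →
        ∃ α' β' : ℕ → ℂ,
          (∀ n, 1 ≤ n → n ≤ l - 1 → α' n ≠ 0) ∧ α' l = αl' ∧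
          TransmissionEigenvalues l α' β' αs' βs' Λ' ∧
          (∀ n, 1 ≤ n → n ≤ l →
            ‖α n - α' n‖ ≤ Cst * δ ∧ ‖β n - β' n‖ ≤ Cst * δ) ∧
          (∀ α'' β'' : ℕ → ℂ,
            (∀ n, 1 ≤ n → n ≤ l - 1 → α'' n ≠ 0) → α'' l = αl' →
            TransmissionEigenvalues l α'' β'' αs' βs' Λ' →
            (∀ n, 1 ≤ n → n ≤ l - 1 → α'' n = α' n) ∧
            (∀ n, 1 ≤ n → n ≤ l → β'' n = β' n)) := by
  obtain ⟨m, rfl⟩ : ∃ k, l = k + 1 := ⟨l - 1, by omega⟩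
  let T := (ℕ → ℂ) × (ℕ → ℂ) × (ℕ → ℂ) × ℂ × ℝ
  let δ : T → ℝ := fun t => t.2.2.2.2
  let S : Set T := {t | (∀ j, 1 ≤ j → j ≤ 2 * (m + 1) - 1 → ‖Λ j - t.1 j‖ ≤ δ t) ∧
    (∀ n, 1 ≤ n → n ≤ m + 1 → ‖αs n - t.2.1 n‖ + ‖βs n - t.2.2.1 n‖ ≤ δ t) ∧
    ‖α (m + 1) - t.2.2.2.1‖ ≤ δ t}
  let F : Filter T := comap δ (𝓝 0) ⊓ 𝓟 S
  have hδ : Tendsto δ F (𝓝 0) := tendsto_comap.mono_left inf_le_left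
  have hS : ∀ᶠ t in F, t ∈ S := mem_inf_of_right (mem_principal_self S)
  have hS0 : ∀ t ∈ S, 0 ≤ δ t := fun t ht => (norm_nonneg _).trans ht.2.2
  have mk : ∀ (f : T → ℂ) (x : ℂ), (∀ t ∈ S, ‖x - f t‖ ≤ δ t) → Good F δ f x := by
    intro f x h
    refine IsBigO.of_bound 1 ?_
    filter_upwards [hS] with t ht
    rw [one_mul, norm_sub_rev]
    exact (h t ht).trans (le_abs_self _)
  obtain ⟨α', β', h1, h2, h3⟩ := family_main hδ m α β αs βs hα hαs hne Λ hΛ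
    (fun t => t.1) (fun t => t.2.1) (fun t => t.2.2.1) (fun t => t.2.2.2.1)
    (fun j u v => mk _ _ fun t ht => ht.1 j u v)
    (fun j u v => mk _ _ fun t ht => le_trans (le_add_of_nonneg_right (norm_nonneg _)) (ht.2.1 j u v))
    (fun j u v => mk _ _ fun t ht => le_trans (le_add_of_nonneg_left (norm_nonneg _)) (ht.2.1 j u v))
    (mk _ _ fun t ht => ht.2.2)
  have hnn : ∀ᶠ t in F, 0 ≤ δ t := hS.mono hS0
  obtain ⟨K1, hK1, b1⟩ := Good.uniform hnn (Finset.Icc 1 (m + 1)) (f := fun n t => α' t n) (a := α)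
    fun i hi => (h2 i (Finset.mem_Icc.1 hi).1 (Finset.mem_Icc.1 hi).2).1
  obtain ⟨K2, hK2, b2⟩ := Good.uniform hnn (Finset.Icc 1 (m + 1)) (f := fun n t => β' t n) (a := β)
    fun i hi => (h2 i (Finset.mem_Icc.1 hi).1 (Finset.mem_Icc.1 hi).2).2
  have hall := (h3.and (b1.and b2))
  obtain ⟨ε, hε, hev⟩ : ∃ ε > (0 : ℝ), ∀ t ∈ S, δ t ≤ ε → ((∀ n ∈ Finset.Icc 1 (m + 1), α' t n ≠ 0) ∧
        TransmissionEigenvalues (m + 1) (α' t) (β' t) (t.2.1) (t.2.2.1) (t.1) ∧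
        (∀ α'' β'' : ℕ → ℂ,
            α'' (m + 1) = t.2.2.2.1 →
            TransmissionEigenvalues (m + 1) α'' β'' (t.2.1) (t.2.2.1) (t.1) →
            (∀ n, 1 ≤ n → n ≤ m + 1 → α' t n = α'' n ∧ β' t n = β'' n))) ∧
        (∀ i ∈ Finset.Icc 1 (m + 1), ‖α i - α' t i‖ ≤ K1 * δ t) ∧
        (∀ i ∈ Finset.Icc 1 (m + 1), ‖β i - β' t i‖ ≤ K2 * δ t) := by
    rw [eventually_inf_principal, eventually_comap, Metric.eventually_nhds_iff] at hall
    obtain ⟨ε, hε, h⟩ := hall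
    refine ⟨ε / 2, half_pos hε, fun t ht hle => h (y := δ t) ?_ t rfl ht⟩
    rw [Real.dist_eq, sub_zero, abs_of_nonneg (hS0 t ht)]
    linarith
  refine ⟨ε, hε, max K1 K2, lt_max_of_lt_left hK1, ?_⟩
  intro Λ' αs' βs' αl' d hd c1 c2 c3
  let t : T := (Λ', αs', βs', αl', d)
  have ht : t ∈ S := ⟨c1, c2, c3⟩
  have hd0 : 0 ≤ d := hS0 t ht
  obtain ⟨⟨r1, r2, r3⟩, r4, r5⟩ := hev t ht hd
  refine ⟨α' t, β' t, fun n u v => r1 n (Finset.mem_Icc.2 ⟨u, by omega⟩), h1 t, r2, ?_, ?_⟩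
  · intro n u v
    have hn := Finset.mem_Icc.2 ⟨u, v⟩
    exact ⟨(r4 n hn).trans (mul_le_mul_of_nonneg_right (le_max_left _ _) hd0),
      (r5 n hn).trans (mul_le_mul_of_nonneg_right (le_max_right _ _) hd0)⟩
  · intro α'' β'' _ w1 w2
    have := r3 α'' β'' w1 w2
    exact ⟨fun n u v => (this n u (by omega)).1.symm, fun n u v => (this n u v).2.symm⟩
end
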